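/- arXiv:2011.00932 — 3 statements merged into one kernel-verified Lean document; each statement's English description precedes it below -/
import Mathlib

section
/- Let F be a field, τ : F → F a ring automorphism, k := F^τ its fixed field, and K a subfield of F with τ(K) = K and k ⊆ K. Let A ∈ GL_d(K), U ∈ GL_d(F) with τ(U) = A·U, R = K[U, (det U)⁻¹] ⊆ F the corresponding Picard-Vessiot ring, and L ⊆ F its field of fractions. Let M be an intermediate field, K ⊆ M ⊆ L, which is itself a Picard-Vessiot field over K: M is generated over K by the entries of some V ∈ GL_e(F) satisfying τ(V) = B·V with B ∈ GL_e(K). Then the Picard-Vessiot ring R_M := K[V, (det V)⁻¹] ⊆ F satisfies R_M = M ∩ R. -/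
set_option synthInstance.maxHeartbeats 400000
set_option maxHeartbeats 1000000

open TensorProduct in
theorem pv_tensor_lift {K A B T : Type*} [CommRing K] [CommRing A] [CommRing B] [CommRing T]
    [Algebra K A] [Algebra K B] (f : A →+* T) (g : B →+* T)
    (h : ∀ c : K, f (algebraMap K A c) = g (algebraMap K B c)) :
    ∃ φ : A ⊗[K] B →+* T, ∀ a b, φ (a ⊗ₜ b) = f a * g b := by
  let _ : Algebra K T := (f.comp (algebraMap K A)).toAlgebra
  let f' : A →ₐ[K] T := { f with commutes' := fun c => rfl }
  let g' : B →ₐ[K] T := { g with commutes' := fun c => (h c).symm }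
  exact ⟨(Algebra.TensorProduct.lift f' g' (fun _ _ => Commute.all _ _)).toRingHom,
    fun a b => Algebra.TensorProduct.lift_tmul _ _ _ _ _⟩

theorem pv_artin {F S ι : Type*} [Field F] [CommRing S] [Algebra F S] (τ : F ≃+* F)
    (k : Subfield F) (hk : ∀ a : F, a ∈ k ↔ τ a = a)
    (τS : S →+* S) (hτS : ∀ a, τS (algebraMap F S a) = algebraMap F S (τ a))
    (γ : ι → S) (hγ : ∀ i, τS (γ i) = γ i) (hli : LinearIndependent k γ) :
    LinearIndependent F γ := by
  classical
  rw [linearIndependent_iff']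
  intro t
  induction t using Finset.induction_on with
  | empty => simp
  | insert a t ha ih =>
    intro g hg
    by_cases h0 : g a = 0
    · rw [Finset.sum_insert ha, h0, zero_smul, zero_add] at hg
      intro i hi
      rcases Finset.mem_insert.1 hi with rfl | hi
      · exact h0
      · exact ih g hg i hi
    · exfalso
      set h : ι → F := fun i => (g a)⁻¹ * g i with hh
      have ha1 : h a = 1 := inv_mul_cancel₀ h0
      have hs : ∑ i ∈ insert a t, h i • γ i = 0 := by
        have := congrArg (fun x => (g a)⁻¹ • x) hg
        simpa [Finset.smul_sum, smul_smul, hh] using this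
      have hs2 : ∑ i ∈ insert a t, τ (h i) • γ i = 0 := by
        have := congrArg τS hs
        simpa only [map_sum, Algebra.smul_def, map_mul, hτS, hγ, map_zero] using this
      have hs3 : ∑ i ∈ t, (τ (h i) - h i) • γ i = 0 := by
        rw [Finset.sum_insert ha, ha1] at hs hs2
        rw [map_one] at hs2
        simp only [sub_smul, Finset.sum_sub_distrib]
        linear_combination hs2 - hs
      have hfix : ∀ i ∈ insert a t, h i ∈ k := by
        intro i hi
        rcases Finset.mem_insert.1 hi with rfl | hi
        · rw [ha1]; exact k.one_mem
        · exact (hk _).2 (sub_eq_zero.1 (ih _ hs3 i hi))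
      let h' : ι → k := fun i => if hi : i ∈ insert a t then ⟨h i, hfix i hi⟩ else 0
      have := (linearIndependent_iff'.1 hli) (insert a t) h' (by
        rw [← hs]
        refine Finset.sum_congr rfl fun i hi => ?_
        simp only [h', dif_pos hi]
        rfl) a (Finset.mem_insert_self _ _)
      simp only [h', dif_pos (Finset.mem_insert_self a t)] at this
      have := congrArg Subtype.val this
      simp [ha1] at this

/-- the subring generated by K and the constants -/
noncomputable def pvE {F S : Type*} [Field F] [CommRing S] [Algebra F S] (K : Subfield F)
    (τS : S →+* S) : Subalgebra K S := Algebra.adjoin K {s : S | τS s = s}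

theorem pv_indep {F S ι : Type*} [Field F] [CommRing S] [Algebra F S] (τ : F ≃+* F)
    (k : Subfield F) (hk : ∀ a : F, a ∈ k ↔ τ a = a)
    (K : Subfield F) (hkK : (k : Set F) ⊆ (K : Set F))
    (τS : S →+* S) (hτS : ∀ a, τS (algebraMap F S a) = algebraMap F S (τ a))
    (b : ι → F) (hb : LinearIndependent K b) :
    LinearIndependent (pvE K τS) (fun i => algebraMap F S (b i)) := by
  classical
  let C : Submodule k S :=
    { carrier := {s | τS s = s}
      add_mem' := by intro a b ha hb; simp only [Set.mem_ofPred_eq] at *; rw [map_add, ha, hb]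
      zero_mem' := by simp
      smul_mem' := by
        intro c x hx
        simp only [Set.mem_ofPred_eq] at *
        rw [show c • x = algebraMap F S (c : F) * x from Algebra.smul_def (c : F) x, map_mul, hx,
          hτS, (hk _).1 c.2] }
  let B := Module.Basis.ofVectorSpace k C
  let γ : _ → S := fun i => (B i : S)
  have hγk : LinearIndependent k γ := B.linearIndependent.map' C.subtype (Submodule.ker_subtype C)
  have hγF : LinearIndependent F γ := pv_artin τ k hk τS hτS γ (fun i => (B i).2) hγk
  have hspan : ∀ x : S, τS x = x → x ∈ Submodule.span K (Set.range γ) := by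
    intro x hx
    have h1 := B.mem_span ⟨x, hx⟩
    have h2 : x ∈ Submodule.span k (Set.range γ) := by
      have := Submodule.mem_map_of_mem (f := C.subtype) h1
      rw [Submodule.map_span, ← Set.range_comp] at this
      exact this
    clear h1 hx
    induction h2 using Submodule.span_induction with
    | mem x hx => exact Submodule.subset_span hx
    | zero => exact Submodule.zero_mem _
    | add x y _ _ hx hy => exact Submodule.add_mem _ hx hy
    | smul a x _ hx => exact Submodule.smul_mem _ (⟨a, hkK a.2⟩ : K) hx
  have hE : ∀ x ∈ pvE K τS, x ∈ Submodule.span K (Set.range γ) := by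
    intro x hx
    have : x ∈ Subalgebra.toSubmodule (pvE K τS) := hx
    rw [pvE, Algebra.adjoin_eq_span] at this
    refine Submodule.span_le.2 ?_ this
    intro y hy
    apply hspan
    have hle : Submonoid.closure {s : S | τS s = s} ≤
        { carrier := {s : S | τS s = s}
          mul_mem' := by
            intro a b ha hb
            simp only [Set.mem_ofPred_eq] at *
            rw [map_mul, ha, hb]
          one_mem' := map_one τS } := Submonoid.closure_le.2 (fun _ h => h)
    exact hle hy
  rw [linearIndependent_iff']
  intro s g hg
  have hc : ∀ i, ∃ c : _ →₀ K, Finsupp.linearCombination K γ c = (g i : S) := fun i => by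
    have := hE _ (g i).2
    rwa [Finsupp.mem_span_range_iff_exists_finsupp] at this
  choose c hc using hc
  let m : ∀ i, _ →₀ F := fun i => (c i).mapRange (fun x : K => (x : F)) rfl
  have hm : ∀ i, Finsupp.linearCombination F γ (m i) = (g i : S) := fun i => by
    rw [← hc i, Finsupp.linearCombination_apply, Finsupp.linearCombination_apply,
      Finsupp.sum_mapRange_index (by simp)]
    rfl
  have hz : Finsupp.linearCombination F γ (∑ i ∈ s, b i • m i) = 0 := by
    rw [← hg, map_sum]
    refine Finset.sum_congr rfl fun i _ => ?_
    rw [map_smul, hm, Algebra.smul_def, mul_comm]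
    rfl
  have hz' := (linearIndependent_iff.1 hγF) _ hz
  intro i hi
  have : c i = 0 := by
    ext l
    have h1 := DFunLike.congr_fun hz' l
    rw [Finsupp.finsetSum_apply] at h1
    have h2 := (linearIndependent_iff'.1 hb) s (fun i => c i l) (by
      rw [Finsupp.zero_apply] at h1
      rw [← h1]
      refine Finset.sum_congr rfl fun i _ => ?_
      simp [m, mul_comm, Subfield.smul_def]) i hi
    simp [h2]
  apply Subtype.ext
  rw [← hc i, this]
  simp

theorem pv_det_mem {F : Type*} [Field F] (K : Subfield F) {d : ℕ}
    (A : Matrix (Fin d) (Fin d) F) (hA : ∀ i j, A i j ∈ K) : A.det ∈ K := by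
  rw [Matrix.det_apply]
  refine K.sum_mem fun p _ => ?_
  rw [Units.smul_def, zsmul_eq_mul]
  exact K.mul_mem (K.intCast_mem _) (K.prod_mem fun i _ => hA _ _)

theorem pv_span_aux {F S : Type*} [Field F] [CommRing S] [Algebra F S] (K : Subfield F)
    (E : Subalgebra K S) (R : Subalgebra K F) (f : R →+* S)
    (hf : ∀ c : K, f (algebraMap K R c) = algebraMap F S c) (s t : Set R)
    (h : s ⊆ Submodule.span K t) :
    Submodule.span E (f '' s) ≤ Submodule.span E (f '' t) := by
  rw [Submodule.span_le]
  rintro _ ⟨x, hx, rfl⟩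
  replace hx := h hx
  simp only [SetLike.mem_coe] at hx ⊢
  induction hx using Submodule.span_induction with
  | mem x hx => exact Submodule.subset_span ⟨x, hx, rfl⟩
  | zero => rw [map_zero]; exact Submodule.zero_mem _
  | add x y _ _ hx hy => rw [map_add]; exact Submodule.add_mem _ hx hy
  | smul a x _ hx =>
    rw [Algebra.smul_def, map_mul, hf]
    exact Submodule.smul_mem _ (algebraMap K E a) hx

theorem pv_inj_core {F S : Type*} [Field F] [CommRing S] [Nontrivial S] [Algebra F S]
    (τ : F ≃+* F)
    (k : Subfield F) (hk : ∀ a : F, a ∈ k ↔ τ a = a)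
    (K : Subfield F) (hkK : (k : Set F) ⊆ (K : Set F))
    (τS : S →+* S) (hτS : ∀ a, τS (algebraMap F S a) = algebraMap F S (τ a))
    (R : Subalgebra K F) (σ : R →+* S)
    (hσK : ∀ c : K, σ (algebraMap K R c) = algebraMap F S c)
    (r : R) (s : Set R) (hs : s.Finite) (hr : r ∈ Submodule.span K s)
    (hspan : Submodule.span (pvE K τS) (((algebraMap F S).comp R.val.toRingHom) '' s)
      = Submodule.span (pvE K τS) (σ '' s)) (h0 : σ r = 0) : r = 0 := by
  set E := pvE K τS with hE
  set ι : R →+* S := (algebraMap F S).comp R.val.toRingHom with hι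
  have hιK : ∀ c : K, ι (algebraMap K R c) = algebraMap F S c := fun c => rfl
  obtain ⟨b, hbs, hbspan, hbli⟩ := exists_linearIndependent K s
  have hbfin : Finite b := hs.subset hbs
  have hsb : s ⊆ Submodule.span K b := by rw [hbspan]; exact Submodule.subset_span
  have hbs' : b ⊆ Submodule.span K s := hbs.trans Submodule.subset_span
  have e1 : Submodule.span E (ι '' b) = Submodule.span E (σ '' b) := by
    rw [le_antisymm (pv_span_aux K E R ι hιK b s hbs') (pv_span_aux K E R ι hιK s b hsb),
      le_antisymm (pv_span_aux K E R σ hσK b s hbs') (pv_span_aux K E R σ hσK s b hsb), hspan]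
  have hbF : LinearIndependent K (fun i : b => ((i : R) : F)) :=
    hbli.map' R.val.toLinearMap (LinearMap.ker_eq_bot.2 Subtype.val_injective)
  have hli : LinearIndependent E (fun i : b => ι i) := pv_indep τ k hk K hkK τS hτS _ hbF
  set N := Submodule.span E (ι '' b) with hN
  have : Module.Finite E N := Module.Finite.span_of_finite E ((hs.subset hbs).image _)
  have r1 : LinearMap.range (Finsupp.linearCombination E (fun i : b => ι i)) = N := by
    rw [Finsupp.range_linearCombination, hN, Set.image_eq_range]
  have r2 : LinearMap.range (Finsupp.linearCombination E (fun i : b => σ i)) = N := by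
    rw [Finsupp.range_linearCombination, e1, Set.image_eq_range]
  let i1 : (b →₀ E) →ₗ[E] N := (Finsupp.linearCombination E (fun i : b => ι i)).codRestrict N
    (fun c => r1 ▸ LinearMap.mem_range_self _ c)
  let i2 : (b →₀ E) →ₗ[E] N := (Finsupp.linearCombination E (fun i : b => σ i)).codRestrict N
    (fun c => r2 ▸ LinearMap.mem_range_self _ c)
  have h1 : Function.Injective i1 := by
    intro x y hxy
    exact hli (congrArg Subtype.val hxy)
  have h2 : Function.Surjective i2 := by
    rintro ⟨y, hy⟩
    rw [← r2] at hy
    obtain ⟨x, hx⟩ := hy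
    exact ⟨x, Subtype.ext hx⟩
  have h3 := OrzechProperty.injective_of_surjective_of_injective i1 i2 h1 h2
  rw [← hbspan] at hr
  rw [← Subtype.range_coe (s := b), Finsupp.mem_span_range_iff_exists_finsupp] at hr
  obtain ⟨c, hc⟩ := hr
  have h4 : i2 (c.mapRange (algebraMap K E) (map_zero _)) = 0 := by
    apply Subtype.ext
    simp only [i2, LinearMap.codRestrict_apply, ZeroMemClass.coe_zero]
    rw [← h0, ← hc, Finsupp.linearCombination_apply, Finsupp.sum_mapRange_index (by simp),
      Finsupp.sum, Finsupp.sum, map_sum]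
    refine Finset.sum_congr rfl fun i _ => ?_
    rw [Algebra.smul_def (c i) (i : R), map_mul, hσK]
    rfl
  have h5 := h3 (h4.trans (map_zero i2).symm)
  have h6 : c = 0 := by
    ext l
    have := DFunLike.congr_fun h5 l
    rw [Finsupp.mapRange_apply, Finsupp.zero_apply] at this
    have h7 := FaithfulSMul.algebraMap_injective K E (this.trans (map_zero _).symm)
    simp [h7]
  rw [← hc, h6, Finsupp.sum_zero_index]

open Pointwise in
theorem pv_inj {F S : Type*} [Field F] [CommRing S] [Nontrivial S] [Algebra F S]
    (τ : F ≃+* F)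
    (k : Subfield F) (hk : ∀ a : F, a ∈ k ↔ τ a = a)
    (K : Subfield F) (hkK : (k : Set F) ⊆ (K : Set F))
    (τS : S →+* S) (hτS : ∀ a, τS (algebraMap F S a) = algebraMap F S (τ a))
    (d : ℕ) (A U : Matrix (Fin d) (Fin d) F)
    (hA : ∀ i j, A i j ∈ K) (hAdet : A.det ≠ 0) (hUdet : U.det ≠ 0)
    (hU : U.map τ = A * U)
    (R : Subalgebra K F)
    (hR : R = Algebra.adjoin K
      ((Set.range fun p : Fin d × Fin d => U p.1 p.2) ∪ {(U.det)⁻¹})) (σ : R →+* S)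
    (hσK : ∀ c : K, σ (algebraMap K R c) = algebraMap F S c)
    (hσ : ∀ r r' : R, (r' : F) = τ r → τS (σ r) = σ r')
    (r : R) (h0 : σ r = 0) : r = 0 := by
  set E := pvE K τS with hE
  set ι : R →+* S := (algebraMap F S).comp R.val.toRingHom with hι
  have hτU : ∀ i j, τ (U i j) = ∑ l, A i l * U l j := fun i j => by
    have := congrFun (congrFun hU i) j
    simpa [Matrix.mul_apply] using this
  have hτdet : τ U.det = A.det * U.det := by
    rw [← Matrix.det_mul, ← hU]
    exact RingHom.map_det τ.toRingHom U
  have hUR : ∀ i j, U i j ∈ R := fun i j => by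
    rw [hR]; exact Algebra.subset_adjoin (Or.inl ⟨(i, j), rfl⟩)
  have hδR : (U.det)⁻¹ ∈ R := by
    rw [hR]; exact Algebra.subset_adjoin (Or.inr rfl)
  have hKR : ∀ a ∈ K, a ∈ R := fun a ha => R.algebraMap_mem ⟨a, ha⟩
  let UR : Matrix (Fin d) (Fin d) R := fun i j => ⟨U i j, hUR i j⟩
  let AR : Matrix (Fin d) (Fin d) R := fun i j => ⟨A i j, hKR _ (hA i j)⟩
  let δ : R := ⟨_, hδR⟩
  have hdetUR : ((UR.det : R) : F) = U.det := by
    exact RingHom.map_det R.val.toRingHom UR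
  have hdetAR : ((AR.det : R) : F) = A.det := by
    exact RingHom.map_det R.val.toRingHom AR
  have hδ : UR.det * δ = 1 := by
    apply Subtype.ext
    change ((UR.det : R) : F) * (U.det)⁻¹ = 1
    rw [hdetUR, mul_inv_cancel₀ hUdet]
  -- the matrices in S
  let P : Matrix (Fin d) (Fin d) S := UR.map ι
  let Q : Matrix (Fin d) (Fin d) S := UR.map σ
  let AS : Matrix (Fin d) (Fin d) S := A.map (algebraMap F S)
  have hAS : AR.map σ = AS := by
    ext i j
    exact hσK ⟨A i j, hA i j⟩
  have hAS' : AR.map ι = AS := rfl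
  have hASdet : IsUnit AS.det := by
    have : AS.det = algebraMap F S A.det := (RingHom.map_det (algebraMap F S) A).symm
    rw [this]; exact (IsUnit.mk0 _ hAdet).map _
  have hURu : IsUnit UR.det := IsUnit.of_mul_eq_one _ hδ
  have hP : IsUnit P.det := by
    have : P.det = ι UR.det := (RingHom.map_det ι UR).symm
    rw [this]; exact hURu.map _
  have hQ : IsUnit Q.det := by
    have : Q.det = σ UR.det := (RingHom.map_det σ UR).symm
    rw [this]; exact hURu.map _
  have hτP : P.map τS = AS * P := by
    ext i j
    rw [Matrix.map_apply, Matrix.mul_apply]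
    change τS (algebraMap F S (U i j)) = _
    rw [hτS, hτU, map_sum]
    exact Finset.sum_congr rfl fun l _ => map_mul _ _ _
  have hτQ : Q.map τS = AS * Q := by
    rw [← hAS, ← Matrix.map_mul]
    ext i j
    refine hσ (UR i j) _ ?_
    change R.val (∑ l, AR i l * UR l j) = τ (U i j)
    rw [hτU, map_sum]
    rfl
  -- constants
  have key : ∀ X Y : Matrix (Fin d) (Fin d) S, IsUnit X.det → X.map τS = AS * X →
      Y.map τS = AS * Y → ∀ i j, τS ((X⁻¹ * Y) i j) = (X⁻¹ * Y) i j := by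
    intro X Y hX h1 h2
    have hXX : X * X⁻¹ = 1 := Matrix.mul_nonsing_inv X hX
    have hXX' : X⁻¹ * X = 1 := Matrix.nonsing_inv_mul X hX
    have hAA : AS⁻¹ * AS = 1 := Matrix.nonsing_inv_mul AS hASdet
    have h3 : AS * X * (X⁻¹ * Y).map τS = AS * Y := by
      rw [← h1, ← Matrix.map_mul, ← mul_assoc, hXX, one_mul, h2]
    have h4 : (X⁻¹ * Y).map τS = X⁻¹ * Y := by
      calc (X⁻¹ * Y).map τS = X⁻¹ * (AS⁻¹ * AS) * X * (X⁻¹ * Y).map τS := by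
            rw [hAA, mul_one, hXX', one_mul]
        _ = X⁻¹ * AS⁻¹ * (AS * X * (X⁻¹ * Y).map τS) := by simp only [mul_assoc]
        _ = X⁻¹ * (AS⁻¹ * AS) * Y := by rw [h3]; simp only [mul_assoc]
        _ = X⁻¹ * Y := by rw [hAA, mul_one]
    intro i j
    exact congrFun (congrFun h4 i) j
  have keyspan : ∀ X Y : Matrix (Fin d) (Fin d) S, IsUnit X.det → X.map τS = AS * X →
      Y.map τS = AS * Y → ∀ i j, Y i j ∈ Submodule.span E
        (Set.range fun p : Fin d × Fin d => X p.1 p.2) := by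
    intro X Y hX h1 h2 i j
    have h3 : Y = X * (X⁻¹ * Y) := by
      rw [← mul_assoc, Matrix.mul_nonsing_inv X hX, one_mul]
    rw [h3, Matrix.mul_apply]
    refine Submodule.sum_mem _ fun l _ => ?_
    rw [mul_comm]
    exact Submodule.smul_mem _ (⟨_, Algebra.subset_adjoin (key X Y hX h1 h2 l j)⟩ : E)
      (Submodule.subset_span ⟨(i, l), rfl⟩)
  -- scalar case
  have key1 : ∀ x y α : S, IsUnit x → IsUnit α → τS x * α = x → τS y * α = y →
      y ∈ Submodule.span E {x} := by
    intro x y α hx hα h1 h2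
    obtain ⟨x', hx'⟩ := hx.exists_right_inv
    have hc : τS (x' * y) = x' * y := by
      have h3 : τS x * τS x' = 1 := by rw [← map_mul, hx', map_one]
      have h4 : x' * x = 1 := by rw [mul_comm]; exact hx'
      rw [map_mul]
      calc τS x' * τS y = (x' * x) * τS x' * τS y := by rw [h4, one_mul]
        _ = (x' * (τS x * α)) * τS x' * τS y := by rw [h1]
        _ = x' * (τS x * τS x') * (τS y * α) := by ring
        _ = x' * y := by rw [h3, h2, mul_one]
    have : y = (⟨x' * y, Algebra.subset_adjoin hc⟩ : E) • x := by
      change y = x' * y * x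
      linear_combination -y * hx'
    rw [this]
    exact Submodule.smul_mem _ _ (Submodule.mem_span_singleton_self x)
  have hδu : IsUnit δ := IsUnit.of_mul_eq_one UR.det (by rw [mul_comm]; exact hδ)
  have hτδ : τ (U.det)⁻¹ * A.det = (U.det)⁻¹ := by
    rw [map_inv₀, hτdet]
    field_simp
  have hαu : IsUnit (algebraMap F S A.det) := (IsUnit.mk0 _ hAdet).map _
  have hδι : τS (ι δ) * algebraMap F S A.det = ι δ := by
    change τS (algebraMap F S (U.det)⁻¹) * _ = algebraMap F S (U.det)⁻¹
    rw [hτS, ← map_mul, hτδ]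
  have hdetA : A.det ∈ K := pv_det_mem K A hA
  have hτδR : τ (U.det)⁻¹ ∈ R := by
    have : τ (U.det)⁻¹ = (U.det)⁻¹ * (A.det)⁻¹ := by
      rw [eq_mul_inv_iff_mul_eq₀ hAdet, hτδ]
    rw [this]
    exact R.mul_mem hδR (hKR _ (K.inv_mem hdetA))
  have hδσ : τS (σ δ) * algebraMap F S A.det = σ δ := by
    rw [hσ δ ⟨_, hτδR⟩ rfl, ← hσK ⟨_, hdetA⟩, ← map_mul]
    congr 1
    exact Subtype.ext hτδ
  -- induction
  have main : ∀ x (hx : x ∈ R), ∃ s : Set R, s.Finite ∧ (⟨x, hx⟩ : R) ∈ Submodule.span K s ∧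
      Submodule.span E (ι '' s) = Submodule.span E (σ '' s) := by
    intro x hx
    have hx' : x ∈ Algebra.adjoin K
      ((Set.range fun p : Fin d × Fin d => U p.1 p.2) ∪ {(U.det)⁻¹}) := hR ▸ hx
    induction hx' using Algebra.adjoin_induction with
    | mem x h =>
      rcases h with ⟨p, rfl⟩ | h
      · refine ⟨Set.range fun p : Fin d × Fin d => UR p.1 p.2, Set.finite_range _,
          Submodule.subset_span ⟨p, rfl⟩, ?_⟩
        rw [← Set.range_comp, ← Set.range_comp]
        apply le_antisymm
        · rw [Submodule.span_le]
          rintro _ ⟨q, rfl⟩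
          exact keyspan Q P hQ hτQ hτP q.1 q.2
        · rw [Submodule.span_le]
          rintro _ ⟨q, rfl⟩
          exact keyspan P Q hP hτP hτQ q.1 q.2
      · obtain rfl : x = (U.det)⁻¹ := h
        refine ⟨{δ}, Set.finite_singleton _, Submodule.mem_span_singleton_self δ, ?_⟩
        rw [Set.image_singleton, Set.image_singleton]
        apply le_antisymm
        · rw [Submodule.span_le, Set.singleton_subset_iff]
          exact key1 _ _ _ (hδu.map σ) hαu hδσ hδι
        · rw [Submodule.span_le, Set.singleton_subset_iff]
          exact key1 _ _ _ (hδu.map ι) hαu hδι hδσ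
    | algebraMap c =>
      refine ⟨{1}, Set.finite_singleton _, ?_, by simp⟩
      rw [Submodule.mem_span_singleton]
      exact ⟨c, by rw [Algebra.smul_def, mul_one]; rfl⟩
    | add x y hx1 hy1 ihx ihy =>
      rw [← hR] at hx1 hy1
      obtain ⟨s, hs, hxs, es⟩ := ihx hx1
      obtain ⟨t, ht, hyt, et⟩ := ihy hy1
      refine ⟨s ∪ t, hs.union ht, ?_, ?_⟩
      · exact Submodule.add_mem _ (Submodule.span_mono Set.subset_union_left hxs)
          (Submodule.span_mono Set.subset_union_right hyt)
      · rw [Set.image_union, Set.image_union, Submodule.span_union, Submodule.span_union, es, et]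
    | mul x y hx1 hy1 ihx ihy =>
      rw [← hR] at hx1 hy1
      obtain ⟨s, hs, hxs, es⟩ := ihx hx1
      obtain ⟨t, ht, hyt, et⟩ := ihy hy1
      refine ⟨s * t, hs.mul ht, ?_, ?_⟩
      · rw [← Submodule.span_mul_span]
        exact Submodule.mul_mem_mul hxs hyt
      · rw [Set.image_mul, Set.image_mul, ← Submodule.span_mul_span, ← Submodule.span_mul_span,
          es, et]
  obtain ⟨s, hs, hrs, es⟩ := main r r.2
  exact pv_inj_core τ k hk K hkK τS hτS R σ hσK r s hs hrs es h0

theorem pv_surj {F : Type*} [Field F] (τ : F ≃+* F) (K : Subfield F)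
    (hτK : ∀ a : F, a ∈ K ↔ τ a ∈ K) (W : Submodule K F) (hW : W.FG)
    (hτW : ∀ w ∈ W, τ w ∈ W) : ∀ w ∈ W, ∃ w' ∈ W, τ w' = w := by
  have hfin : Module.Finite K W := Module.Finite.iff_fg.2 hW
  let W' : Submodule K F :=
    { carrier := {x | ∃ w ∈ W, τ w = x}
      add_mem' := by
        rintro _ _ ⟨a, ha, rfl⟩ ⟨b, hb, rfl⟩
        exact ⟨a + b, W.add_mem ha hb, map_add _ _ _⟩
      zero_mem' := ⟨0, W.zero_mem, map_zero _⟩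
      smul_mem' := by
        rintro c _ ⟨a, ha, rfl⟩
        refine ⟨(⟨τ.symm c, (hτK _).2 (by simp)⟩ : K) • a, W.smul_mem _ ha, ?_⟩
        rw [Subfield.smul_def, Subfield.smul_def, smul_eq_mul, smul_eq_mul, map_mul]
        simp }
  have hle : W' ≤ W := by
    rintro _ ⟨a, ha, rfl⟩
    exact hτW a ha
  let j : W ≃+ W' := AddEquiv.ofBijective
    ({ toFun := fun w => ⟨τ w, w, w.2, rfl⟩
       map_zero' := Subtype.ext (map_zero τ)
       map_add' := fun a b => Subtype.ext (map_add τ _ _) } : W →+ W')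
    ⟨fun a b h => Subtype.ext (τ.injective (congrArg Subtype.val h)),
      by rintro ⟨_, w, hw, rfl⟩; exact ⟨⟨w, hw⟩, rfl⟩⟩
  let i : K → K := fun c => ⟨τ c, (hτK _).1 c.2⟩
  have hi : Function.Bijective i :=
    ⟨fun a b h => Subtype.ext (τ.injective (congrArg Subtype.val h)),
      fun c => ⟨⟨τ.symm c, (hτK _).2 (by simp)⟩, Subtype.ext (by simp [i])⟩⟩
  have hrank : Module.rank K W = Module.rank K W' :=
    rank_eq_of_equiv_equiv i j hi (fun r m => Subtype.ext (map_mul τ _ _))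
  have heq : W' = W := Submodule.eq_of_le_of_finrank_eq hle
    (by rw [Module.finrank, Module.finrank, hrank])
  intro w hw
  rw [← heq] at hw
  exact hw

theorem pv_denom {F : Type*} [Field F] (K : Subfield F) (R : Subalgebra K F) (T : Set F)
    (hT : T ⊆ R) (x : F) (hx : x ∈ Subfield.closure ((K : Set F) ∪ T)) :
    ∃ b ∈ R, b ≠ 0 ∧ b * x ∈ R := by
  induction hx using Subfield.closure_induction with
  | mem x h =>
    refine ⟨1, R.one_mem, one_ne_zero, ?_⟩
    rw [one_mul]
    rcases h with h | h
    · exact R.algebraMap_mem ⟨x, h⟩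
    · exact hT h
  | one => exact ⟨1, R.one_mem, one_ne_zero, by rw [one_mul]; exact R.one_mem⟩
  | add x y _ _ hx hy =>
    obtain ⟨b, hb, hb0, hbx⟩ := hx
    obtain ⟨c, hc, hc0, hcy⟩ := hy
    refine ⟨b * c, R.mul_mem hb hc, mul_ne_zero hb0 hc0, ?_⟩
    rw [show b * c * (x + y) = c * (b * x) + b * (c * y) by ring]
    exact R.add_mem (R.mul_mem hc hbx) (R.mul_mem hb hcy)
  | neg x _ hx =>
    obtain ⟨b, hb, hb0, hbx⟩ := hx
    refine ⟨b, hb, hb0, ?_⟩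
    rw [mul_neg]; exact R.neg_mem hbx
  | inv x _ hx =>
    obtain ⟨b, hb, hb0, hbx⟩ := hx
    by_cases h0 : x = 0
    · exact ⟨1, R.one_mem, one_ne_zero, by rw [h0, inv_zero, mul_zero]; exact R.zero_mem⟩
    · refine ⟨b * x, hbx, mul_ne_zero hb0 h0, ?_⟩
      rw [mul_assoc, mul_inv_cancel₀ h0, mul_one]; exact hb
  | mul x y _ _ hx hy =>
    obtain ⟨b, hb, hb0, hbx⟩ := hx
    obtain ⟨c, hc, hc0, hcy⟩ := hy
    refine ⟨b * c, R.mul_mem hb hc, mul_ne_zero hb0 hc0, ?_⟩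
    rw [show b * c * (x * y) = (b * x) * (c * y) by ring]
    exact R.mul_mem hbx hcy

theorem pv_common_denom {F : Type*} [Field F] (K : Subfield F) (R : Subalgebra K F)
    (W : Submodule K F) (hW : W.FG) (h : ∀ x ∈ W, ∃ b ∈ R, b ≠ 0 ∧ b * x ∈ R) :
    ∃ b ∈ R, b ≠ 0 ∧ ∀ x ∈ W, b * x ∈ R := by
  classical
  obtain ⟨s, rfl⟩ := hW
  replace h : ∀ x ∈ s, ∃ b ∈ R, b ≠ 0 ∧ b * x ∈ R := fun x hx => h x (Submodule.subset_span hx)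
  have : ∃ b ∈ R, b ≠ 0 ∧ ∀ x ∈ s, b * x ∈ R := by
    induction s using Finset.induction_on with
    | empty => exact ⟨1, R.one_mem, one_ne_zero, by simp⟩
    | insert a t ha ih =>
      obtain ⟨b, hb, hb0, hbt⟩ := ih fun x hx => h x (Finset.mem_insert_of_mem hx)
      obtain ⟨c, hc, hc0, hca⟩ := h a (Finset.mem_insert_self _ _)
      refine ⟨b * c, R.mul_mem hb hc, mul_ne_zero hb0 hc0, fun x hx => ?_⟩
      rcases Finset.mem_insert.1 hx with rfl | hx
      · rw [mul_assoc]; exact R.mul_mem hb hca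
      · rw [mul_comm b c, mul_assoc]; exact R.mul_mem hc (hbt x hx)
  obtain ⟨b, hb, hb0, hbs⟩ := this
  refine ⟨b, hb, hb0, fun x hx => ?_⟩
  induction hx using Submodule.span_induction with
  | mem x hx => exact hbs x hx
  | zero => rw [mul_zero]; exact R.zero_mem
  | add x y _ _ hx hy => rw [mul_add]; exact R.add_mem hx hy
  | smul a x _ hx => rw [mul_smul_comm]; exact R.smul_mem hx a

open TensorProduct in
theorem pv_inj_Q {F Q : Type*} [Field F] [CommRing Q] [Nontrivial Q] (τ : F ≃+* F)
    (k : Subfield F) (hk : ∀ a : F, a ∈ k ↔ τ a = a)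
    (K : Subfield F) [Algebra K Q] (hkK : (k : Set F) ⊆ (K : Set F))
    (hτK : ∀ a : F, a ∈ K ↔ τ a ∈ K)
    (d : ℕ) (A U : Matrix (Fin d) (Fin d) F)
    (hA : ∀ i j, A i j ∈ K) (hAdet : A.det ≠ 0) (hUdet : U.det ≠ 0)
    (hU : U.map τ = A * U)
    (R : Subalgebra K F)
    (hR : R = Algebra.adjoin K
      ((Set.range fun p : Fin d × Fin d => U p.1 p.2) ∪ {(U.det)⁻¹})) (φ : R →+* Q)
    (hφK : ∀ c : K, φ (algebraMap K R c) = algebraMap K Q c) (τQ : Q →+* Q)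
    (hφ : ∀ r r' : R, (r' : F) = τ r → τQ (φ r) = φ r')
    (r : R) (h0 : φ r = 0) : r = 0 := by
  let inL : F →+* F ⊗[K] Q := Algebra.TensorProduct.includeLeftRingHom
  let inR : Q →+* F ⊗[K] Q :=
    (Algebra.TensorProduct.includeRight : Q →ₐ[K] F ⊗[K] Q).toRingHom
  have hcomp : ∀ c : K, inL (c : F) = inR (algebraMap K Q c) := by
    intro c
    change (c : F) ⊗ₜ[K] (1 : Q) = (1 : F) ⊗ₜ[K] (algebraMap K Q c)
    rw [Algebra.algebraMap_eq_smul_one, TensorProduct.tmul_smul, TensorProduct.smul_tmul',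
      Subfield.smul_def, smul_eq_mul, mul_one]
  obtain ⟨τS, hτS⟩ := pv_tensor_lift (K := K) (A := F) (B := Q) (T := F ⊗[K] Q)
    (inL.comp τ.toRingHom) (inR.comp τQ) (by
      intro c
      have h1 := hcomp ⟨τ c, (hτK _).1 c.2⟩
      refine h1.trans ?_
      change inR _ = inR (τQ _)
      congr 1
      rw [← hφK, ← hφK]
      exact (hφ _ _ rfl).symm)
  refine pv_inj (S := F ⊗[K] Q) τ k hk K hkK τS
    (by
      intro a
      have := hτS a 1
      rw [map_one, mul_one] at this
      exact this)
    d A U hA hAdet hUdet hU R hR (inR.comp φ)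
    (fun c => by rw [RingHom.comp_apply, hφK]; exact (hcomp c).symm)
    (by
      intro r r' h
      have h1 := hτS 1 (φ r)
      rw [map_one, one_mul] at h1
      refine h1.trans ?_
      change inR (τQ _) = inR _
      rw [hφ r r' h])
    r (by rw [RingHom.comp_apply, h0, map_zero])

theorem pv_W {F : Type*} [Field F] (τ : F ≃+* F)
    (k : Subfield F) (hk : ∀ a : F, a ∈ k ↔ τ a = a)
    (K : Subfield F) (hkK : (k : Set F) ⊆ (K : Set F)) (hτK : ∀ a : F, a ∈ K ↔ τ a ∈ K)
    (d : ℕ) (A U : Matrix (Fin d) (Fin d) F)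
    (hA : ∀ i j, A i j ∈ K) (hAdet : A.det ≠ 0) (hUdet : U.det ≠ 0)
    (hU : U.map τ = A * U)
    (R : Subalgebra K F)
    (hR : R = Algebra.adjoin K
      ((Set.range fun p : Fin d × Fin d => U p.1 p.2) ∪ {(U.det)⁻¹}))
    (W : Submodule K F) (hW : W.FG)
    (hWL : ∀ w ∈ W, w ∈ Subfield.closure
      ((K : Set F) ∪ Set.range fun p : Fin d × Fin d => U p.1 p.2))
    (hτW : ∀ w ∈ W, τ w ∈ W) : ∀ w ∈ W, w ∈ R := by
  have hUR : ∀ i j, U i j ∈ R := fun i j => by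
    rw [hR]; exact Algebra.subset_adjoin (Or.inl ⟨(i, j), rfl⟩)
  have hδR : (U.det)⁻¹ ∈ R := by
    rw [hR]; exact Algebra.subset_adjoin (Or.inr rfl)
  have hKR : ∀ a ∈ K, a ∈ R := fun a ha => R.algebraMap_mem ⟨a, ha⟩
  have hτU : ∀ i j, τ (U i j) = ∑ l, A i l * U l j := fun i j => by
    have := congrFun (congrFun hU i) j
    simpa [Matrix.mul_apply] using this
  have hτdet : τ U.det = A.det * U.det := by
    rw [← Matrix.det_mul, ← hU]
    exact RingHom.map_det τ.toRingHom U
  have hτR : ∀ x ∈ R, τ x ∈ R := by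
    intro x hx
    have hx' : x ∈ Algebra.adjoin K
      ((Set.range fun p : Fin d × Fin d => U p.1 p.2) ∪ {(U.det)⁻¹}) := hR ▸ hx
    clear hx
    induction hx' using Algebra.adjoin_induction with
    | mem x h =>
      rcases h with ⟨p, rfl⟩ | h
      · rw [hτU]
        exact R.sum_mem fun l _ => R.mul_mem (hKR _ (hA _ _)) (hUR _ _)
      · obtain rfl : x = (U.det)⁻¹ := h
        rw [map_inv₀, hτdet, mul_inv]
        exact R.mul_mem (hKR _ (K.inv_mem (pv_det_mem K A hA))) hδR
    | algebraMap c => exact hKR _ ((hτK _).1 c.2)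
    | add x y _ _ hx hy => rw [map_add]; exact R.add_mem hx hy
    | mul x y _ _ hx hy => rw [map_mul]; exact R.mul_mem hx hy
  let τR : R →+* R :=
    { toFun := fun r => ⟨τ r, hτR _ r.2⟩
      map_one' := Subtype.ext (map_one τ)
      map_mul' := fun a b => Subtype.ext (map_mul τ _ _)
      map_zero' := Subtype.ext (map_zero τ)
      map_add' := fun a b => Subtype.ext (map_add τ _ _) }
  let I : Ideal R :=
    { carrier := {r | ∀ w ∈ W, (r : F) * w ∈ R}
      add_mem' := by
        intro a b ha hb w hw
        change ((a : F) + b) * w ∈ R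
        rw [add_mul]
        exact R.add_mem (ha w hw) (hb w hw)
      zero_mem' := by
        intro w hw
        change (0 : F) * w ∈ R
        rw [zero_mul]; exact R.zero_mem
      smul_mem' := by
        intro c x hx w hw
        change (c : F) * x * w ∈ R
        rw [mul_assoc]
        exact R.mul_mem c.2 (hx w hw) }
  have hsurj := pv_surj τ K hτK W hW hτW
  have hI : I ≤ I.comap τR := by
    intro r hr
    change ∀ w ∈ W, τ (r : F) * w ∈ R
    intro w hw
    obtain ⟨w', hw', rfl⟩ := hsurj w hw
    rw [← map_mul]
    exact hτR _ (hr w' hw')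
  obtain ⟨b, hb, hb0, hbW⟩ := pv_common_denom K R W hW (fun x hx => pv_denom K R
    (Set.range fun p : Fin d × Fin d => U p.1 p.2)
    (by rintro _ ⟨p, rfl⟩; exact hUR _ _) x (hWL x hx))
  have hbI : (⟨b, hb⟩ : R) ∈ I := hbW
  by_cases htop : I = ⊤
  · have h1 : (1 : R) ∈ I := by rw [htop]; trivial
    intro w hw
    have : (1 : F) * w ∈ R := h1 w hw
    rwa [one_mul] at this
  · exfalso
    have hnt : Nontrivial (R ⧸ I) := Ideal.Quotient.nontrivial_iff.2 htop
    let τQ : (R ⧸ I) →+* (R ⧸ I) := Ideal.quotientMap I τR hI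
    have hτQ : ∀ r : R, τQ (Ideal.Quotient.mk I r) = Ideal.Quotient.mk I (τR r) :=
      fun r => Ideal.quotientMap_mk
    have := pv_inj_Q (Q := R ⧸ I) τ k hk K hkK hτK d A U hA hAdet hUdet hU R hR
      (Ideal.Quotient.mk I) (fun c => rfl) τQ
      (by
        intro r r' h
        rw [hτQ]
        congr 1
        exact Subtype.ext h.symm)
      ⟨b, hb⟩ (Ideal.Quotient.eq_zero_iff_mem.2 hbI)
    exact hb0 (congrArg Subtype.val this)


theorem pv_stable_span {F : Type*} [Field F] (τ : F ≃+* F)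
    (K : Subfield F) (hτK : ∀ a : F, a ∈ K ↔ τ a ∈ K) (s : Set F)
    (hs : ∀ x ∈ s, τ x ∈ Submodule.span K s) :
    ∀ x ∈ Submodule.span K s, τ x ∈ Submodule.span K s := by
  intro x hx
  induction hx using Submodule.span_induction with
  | mem x hx => exact hs x hx
  | zero => rw [map_zero]; exact Submodule.zero_mem _
  | add x y _ _ hx hy => rw [map_add]; exact Submodule.add_mem _ hx hy
  | smul a x _ hx =>
    rw [Subfield.smul_def, smul_eq_mul, map_mul]
    exact Submodule.smul_mem _ (⟨τ a, (hτK _).1 a.2⟩ : K) hx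

theorem pv_stable_U {F : Type*} [Field F] (τ : F ≃+* F)
    (K : Subfield F) (hτK : ∀ a : F, a ∈ K ↔ τ a ∈ K)
    (d : ℕ) (A U : Matrix (Fin d) (Fin d) F) (hA : ∀ i j, A i j ∈ K) (hU : U.map τ = A * U) :
    ∀ x ∈ Submodule.span K (Set.range fun p : Fin d × Fin d => U p.1 p.2),
      τ x ∈ Submodule.span K (Set.range fun p : Fin d × Fin d => U p.1 p.2) := by
  apply pv_stable_span τ K hτK
  rintro _ ⟨p, rfl⟩
  have := congrFun (congrFun hU p.1) p.2
  rw [Matrix.map_apply, Matrix.mul_apply] at this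
  rw [this]
  refine Submodule.sum_mem _ fun l _ => ?_
  exact Submodule.smul_mem _ (⟨_, hA p.1 l⟩ : K) (Submodule.subset_span ⟨(l, p.2), rfl⟩)

theorem pv_stable_det {F : Type*} [Field F] (τ : F ≃+* F)
    (K : Subfield F) (hτK : ∀ a : F, a ∈ K ↔ τ a ∈ K)
    (d : ℕ) (A U : Matrix (Fin d) (Fin d) F) (hA : ∀ i j, A i j ∈ K) (hU : U.map τ = A * U) :
    ∀ x ∈ Submodule.span K {(U.det)⁻¹}, τ x ∈ Submodule.span K {(U.det)⁻¹} := by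
  apply pv_stable_span τ K hτK
  rintro _ rfl
  have hτdet : τ U.det = A.det * U.det := by
    rw [← Matrix.det_mul, ← hU]
    exact RingHom.map_det τ.toRingHom U
  rw [map_inv₀, hτdet, mul_inv]
  exact Submodule.smul_mem _ (⟨_, K.inv_mem (pv_det_mem K A hA)⟩ : K)
    (Submodule.mem_span_singleton_self _)

theorem pv_finite {F : Type*} [Field F] (τ : F ≃+* F)
    (K : Subfield F) (hτK : ∀ a : F, a ∈ K ↔ τ a ∈ K)
    (d : ℕ) (A U : Matrix (Fin d) (Fin d) F) (hA : ∀ i j, A i j ∈ K)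
    (hU : U.map τ = A * U) (x : F)
    (hx : x ∈ Algebra.adjoin K
      ((Set.range fun p : Fin d × Fin d => U p.1 p.2) ∪ {(U.det)⁻¹})) :
    ∃ W : Submodule K F, W.FG ∧ x ∈ W ∧ (∀ w ∈ W, τ w ∈ W) := by
  induction hx using Algebra.adjoin_induction with
  | mem x h =>
    rcases h with h | h
    · exact ⟨_, Submodule.fg_span (Set.finite_range _), Submodule.subset_span h,
        pv_stable_U τ K hτK d A U hA hU⟩
    · exact ⟨_, Submodule.fg_span (Set.finite_singleton _), Submodule.subset_span h,
        pv_stable_det τ K hτK d A U hA hU⟩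
  | algebraMap c =>
    refine ⟨Submodule.span K {1}, Submodule.fg_span (Set.finite_singleton _), ?_, ?_⟩
    · rw [Algebra.algebraMap_eq_smul_one]
      exact Submodule.smul_mem _ _ (Submodule.mem_span_singleton_self _)
    · apply pv_stable_span τ K hτK
      rintro _ rfl
      rw [map_one]
      exact Submodule.mem_span_singleton_self _
  | add x y _ _ hx hy =>
    obtain ⟨W, h1, h2, h3⟩ := hx
    obtain ⟨W', h1', h2', h3'⟩ := hy
    refine ⟨W ⊔ W', h1.sup h1', Submodule.add_mem_sup h2 h2', fun w hw => ?_⟩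
    obtain ⟨a, ha, b, hb, rfl⟩ := Submodule.mem_sup.1 hw
    rw [map_add]
    exact Submodule.add_mem_sup (h3 a ha) (h3' b hb)
  | mul x y _ _ hx hy =>
    obtain ⟨W, h1, h2, h3⟩ := hx
    obtain ⟨W', h1', h2', h3'⟩ := hy
    refine ⟨W * W', h1.mul h1', Submodule.mul_mem_mul h2 h2', fun w hw => ?_⟩
    induction hw using Submodule.mul_induction_on' with
    | mem_mul_mem a ha b hb =>
      rw [map_mul]
      exact Submodule.mul_mem_mul (h3 a ha) (h3' b hb)
    | add a _ b _ ha hb => rw [map_add]; exact Submodule.add_mem _ ha hb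


/-- If `M` is an intermediate field of the Picard-Vessiot extension `L/K` which is itself a
Picard-Vessiot field over `K`, with Picard-Vessiot ring `R_M`, then `R_M = M ∩ R`. -/
theorem picardVessiot_ring_of_intermediate_field
    (F : Type*) [Field F] (τ : F ≃+* F)
    (k : Subfield F) (hk : ∀ a : F, a ∈ k ↔ τ a = a)
    (K : Subfield F) (hkK : (k : Set F) ⊆ (K : Set F)) (hτK : ∀ a : F, a ∈ K ↔ τ a ∈ K)
    -- the ambient Picard-Vessiot data
    (d : ℕ) (A U : Matrix (Fin d) (Fin d) F)
    (hA : ∀ i j, A i j ∈ K) (hAdet : A.det ≠ 0) (hUdet : U.det ≠ 0)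
    (hU : U.map τ = A * U)
    (R : Subalgebra K F)
    (hR : R = Algebra.adjoin K
      ((Set.range fun p : Fin d × Fin d => U p.1 p.2) ∪ {(U.det)⁻¹}))
    (L : Subfield F)
    (hL : L = Subfield.closure ((K : Set F) ∪ Set.range fun p : Fin d × Fin d => U p.1 p.2))
    -- the intermediate Picard-Vessiot data
    (e : ℕ) (B V : Matrix (Fin e) (Fin e) F)
    (hB : ∀ i j, B i j ∈ K) (hBdet : B.det ≠ 0) (hVdet : V.det ≠ 0)
    (hV : V.map τ = B * V)
    (M : Subfield F)
    (hM : M = Subfield.closure ((K : Set F) ∪ Set.range fun p : Fin e × Fin e => V p.1 p.2))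
    (hML : M ≤ L)
    (RM : Subalgebra K F)
    (hRM : RM = Algebra.adjoin K
      ((Set.range fun p : Fin e × Fin e => V p.1 p.2) ∪ {(V.det)⁻¹})) :
    (RM : Set F) = (M : Set F) ∩ (R : Set F) := by
  have hKM : ∀ a ∈ K, a ∈ M := fun a ha => by
    rw [hM]; exact Subfield.subset_closure (Or.inl ha)
  have hVM : ∀ i j, V i j ∈ M := fun i j => by
    rw [hM]; exact Subfield.subset_closure (Or.inr ⟨(i, j), rfl⟩)
  have hdM : (V.det)⁻¹ ∈ M := M.inv_mem (pv_det_mem M V hVM)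
  let MS : Submodule K F :=
    { carrier := M
      add_mem' := fun ha hb => M.add_mem ha hb
      zero_mem' := M.zero_mem
      smul_mem' := fun c x hx => M.mul_mem (hKM _ c.2) hx }
  have hτM : ∀ x ∈ M, τ x ∈ M := by
    have : M ≤ M.comap τ.toRingHom := by
      conv_lhs => rw [hM]
      rw [Subfield.closure_le]
      rintro x (hx | ⟨p, rfl⟩)
      · exact hKM _ ((hτK _).1 hx)
      · have := congrFun (congrFun hV p.1) p.2
        rw [Matrix.map_apply, Matrix.mul_apply] at this
        change τ (V p.1 p.2) ∈ M
        rw [this]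
        exact M.sum_mem fun l _ => M.mul_mem (hKM _ (hB _ _)) (hVM _ _)
    exact this
  have hgen : ∀ s : Set F, s.Finite → s ⊆ M →
      (∀ w ∈ Submodule.span K s, τ w ∈ Submodule.span K s) → s ⊆ R := by
    intro s hs hsM hτs x hx
    refine pv_W τ k hk K hkK hτK d A U hA hAdet hUdet hU R hR (Submodule.span K s)
      (Submodule.fg_span hs) ?_ hτs x (Submodule.subset_span hx)
    intro w hw
    rw [← hL]
    apply hML
    have : Submodule.span K s ≤ MS := Submodule.span_le.2 hsM
    exact this hw
  apply Set.Subset.antisymm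
  · apply Set.subset_inter
    · intro x hx
      have hx' : x ∈ RM := hx
      rw [hRM] at hx'
      clear hx
      induction hx' using Algebra.adjoin_induction with
      | mem x h =>
        rcases h with ⟨p, rfl⟩ | h
        · exact hVM _ _
        · obtain rfl : x = (V.det)⁻¹ := h
          exact hdM
      | algebraMap c => exact hKM _ c.2
      | add x y hx1 hy1 hx hy =>
        exact M.add_mem hx hy
      | mul x y hx1 hy1 hx hy =>
        exact M.mul_mem hx hy
    · have : RM ≤ R := by
        rw [hRM]
        refine Algebra.adjoin_le (Set.union_subset ?_ ?_)
        · refine hgen _ (Set.finite_range _) ?_ (pv_stable_U τ K hτK e B V hB hV)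
          rintro _ ⟨p, rfl⟩
          exact hVM _ _
        · refine hgen _ (Set.finite_singleton _) ?_ (pv_stable_det τ K hτK e B V hB hV)
          rintro _ rfl
          exact hdM
      exact this
  · rintro x ⟨hxM, hxR⟩
    have hxR' : x ∈ R := hxR
    rw [hR] at hxR'
    obtain ⟨W, hW, hxW, hτW⟩ := pv_finite τ K hτK d A U hA hU x hxR'
    have hfin : Module.Finite K W := Module.Finite.iff_fg.2 hW
    refine pv_W τ k hk K hkK hτK e B V hB hBdet hVdet hV RM hRM (W ⊓ MS) ?_ ?_ ?_ x ⟨hxW, hxM⟩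
    · exact Module.Finite.iff_fg.1 (Submodule.finiteDimensional_inf_left W MS)
    · intro w hw
      rw [← hM]; exact hw.2
    · intro w hw
      exact ⟨hτW w hw.1, hτM w hw.2⟩
end

section
/- Let F be a field, τ : F → F a ring automorphism, k := F^τ its fixed field, and K a subfield of F with τ(K) = K and k ⊆ K. Let A ∈ GL_d(K), U ∈ GL_d(F) with τ(U) = A·U, and R = K[U, (det U)⁻¹] ⊆ F the corresponding Picard-Vessiot ring. Fix f ∈ R and suppose a₀, …, aₘ ∈ K with aₘ ≠ 0 are such that a₀f + a₁τ(f) + ⋯ + aₘτᵐ(f) = 0, and that m is minimal: there is no relation b₀f + b₁τ(f) + ⋯ + b_{m'}τ^{m'}(f) = 0 with b₀, …, b_{m'} ∈ K not all zero and m' < m. Then the set W = {y ∈ R : a₀y + a₁τ(y) + ⋯ + aₘτᵐ(y) = 0} is a k-vector space of dimension exactly m. -/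
open TensorProduct

set_option synthInstance.maxHeartbeats 400000
set_option maxHeartbeats 1000000

theorem fixed_indep {F : Type*} [Field F] (τ : F ≃+* F) (k : Subfield F)
    (hk : ∀ a : F, a ∈ k ↔ τ a = a) {T : Type*} [AddCommGroup T] [Module F T]
    (σ : T →+ T) (hσ : ∀ (x : F) (t : T), σ (x • t) = τ x • σ t)
    {ι : Type*} (v : ι → T) (hv : ∀ i, σ (v i) = v i) (hi : LinearIndependent k v) :
    LinearIndependent F v := by
  classical
  rw [linearIndependent_iff']
  intro s
  induction s using Finset.induction_on with
  | empty => simp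
  | insert a s ha ih =>
    intro g hg
    have key : g a = 0 := by
      by_contra hga
      have h1 : v a + ∑ i ∈ s, ((g a)⁻¹ * g i) • v i = 0 := by
        rw [Finset.sum_insert ha] at hg
        have := congrArg (fun t => (g a)⁻¹ • t) hg
        simpa [smul_add, Finset.smul_sum, smul_smul, inv_mul_cancel₀ hga] using this
      have h2 : v a + ∑ i ∈ s, (τ ((g a)⁻¹ * g i)) • v i = 0 := by
        have := congrArg σ h1
        rw [map_add, map_sum, map_zero] at this
        simpa only [hσ, hv] using this
      have h3 : ∑ i ∈ s, (τ ((g a)⁻¹ * g i) - (g a)⁻¹ * g i) • v i = 0 := by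
        simp only [sub_smul, Finset.sum_sub_distrib]
        rw [sub_eq_zero]
        exact add_left_cancel (h2.trans h1.symm)
      have h4 : ∀ i ∈ s, (g a)⁻¹ * g i ∈ k := fun i his =>
        (hk _).2 (sub_eq_zero.1 (ih _ h3 i his))
      have h5 := (linearIndependent_iff'.1 hi) (insert a s)
        (fun i => if h : (g a)⁻¹ * g i ∈ k then ⟨_, h⟩ else 0) (by
          rw [← h1, Finset.sum_insert ha]
          congr 1
          · have : (g a)⁻¹ * g a ∈ k := by rw [inv_mul_cancel₀ hga]; exact k.one_mem
            rw [dif_pos this]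
            change ((g a)⁻¹ * g a) • v a = v a
            rw [inv_mul_cancel₀ hga, one_smul]
          · refine Finset.sum_congr rfl fun i his => ?_
            rw [dif_pos (h4 i his)]; rfl) a (Finset.mem_insert_self _ _)
      have : (g a)⁻¹ * g a ∈ k := by rw [inv_mul_cancel₀ hga]; exact k.one_mem
      rw [dif_pos this] at h5
      have := congrArg Subtype.val h5
      simp [hga] at this
    rw [Finset.sum_insert ha, key, zero_smul, zero_add] at hg
    intro i his
    rcases Finset.mem_insert.1 his with rfl | h
    · exact key
    · exact ih g hg i h

theorem tensor_lift {F : Type*} [Field F] (K : Subfield F) {T : Type*} [CommRing T]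
    (g h : F →+* T) (hgh : ∀ x ∈ K, g x = h x) :
    ∃ φ : (F ⊗[K] F) →+* T, ∀ x y, φ (x ⊗ₜ y) = g x * h y := by
  let _ : Algebra K T := (g.comp K.subtype).toAlgebra
  let g' : F →ₐ[K] T := { g with commutes' := fun _ => rfl }
  let h' : F →ₐ[K] T := { h with commutes' := fun x => (hgh x x.2).symm }
  refine ⟨(Algebra.TensorProduct.lift g' h' (fun _ _ => Commute.all _ _)).toRingHom, ?_⟩
  intro x y
  exact Algebra.TensorProduct.lift_tmul _ _ _ _ _

theorem tensor_indep {F : Type*} [Field F] (K : Subfield F) {ι : Type*} (v : ι → F)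
    (hv : LinearIndependent K v) :
    LinearIndependent F (fun i => (1 : F) ⊗ₜ[K] v i) := by
  let b := Module.Basis.sumExtend hv
  have := (Algebra.TensorProduct.basis F b).linearIndependent.comp Sum.inl Sum.inl_injective
  convert this using 2 with i
  simp only [b, Module.Basis.sumExtend, Function.comp, Algebra.TensorProduct.basis_apply,
    Module.Basis.reindex_apply, Module.Basis.extend_apply_self]
  rfl

theorem exists_T {F : Type*} [Field F] (τ : F ≃+* F) (K : Subfield F)
    (hτK : ∀ a : F, a ∈ K ↔ τ a ∈ K) :
    ∃ σ : (F ⊗[K] F) →+* (F ⊗[K] F), (∀ (x : F) t, σ (x • t) = τ x • σ t) ∧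
      ∀ y, σ (1 ⊗ₜ y) = 1 ⊗ₜ τ y := by
  obtain ⟨σ, hσ⟩ := tensor_lift K
    ((Algebra.TensorProduct.includeLeft : F →ₐ[K] F ⊗[K] F).toRingHom.comp τ.toRingHom)
    ((Algebra.TensorProduct.includeRight : F →ₐ[K] F ⊗[K] F).toRingHom.comp τ.toRingHom) (by
      intro x hx
      have h := (hτK x).1 hx
      change (τ x) ⊗ₜ[K] (1:F) = 1 ⊗ₜ τ x
      have := TensorProduct.smul_tmul (R := K) (⟨τ x, h⟩ : K) (1:F) (1:F)
      simpa [Subfield.smul_def] using this)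
  have hσ' : ∀ x y, σ (x ⊗ₜ y) = τ x ⊗ₜ τ y := by
    intro x y
    rw [hσ]
    change (τ x) ⊗ₜ[K] (1:F) * 1 ⊗ₜ τ y = _
    simp
  refine ⟨σ, fun x t => ?_, fun y => by rw [hσ', map_one]⟩
  have h1 : x • t = (x ⊗ₜ[K] (1:F)) * t :=
    Algebra.smul_def (A := F ⊗[K] F) x t
  have h2 : τ x • σ t = (τ x ⊗ₜ[K] (1:F)) * σ t :=
    Algebra.smul_def (A := F ⊗[K] F) (τ x) (σ t)
  rw [h1, map_mul, hσ', map_one, h2]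

theorem coaction {F : Type*} [Field F] (τ : F ≃+* F)
    (k : Subfield F) (hk : ∀ a : F, a ∈ k ↔ τ a = a)
    (K : Subfield F) (hkK : (k : Set F) ⊆ (K : Set F))
    (d : ℕ) (A U : Matrix (Fin d) (Fin d) F)
    (hA : ∀ i j, A i j ∈ K) (hAdet : A.det ≠ 0) (hUdet : U.det ≠ 0)
    (hU : U.map τ = A * U)
    (R : Subalgebra K F)
    (hR : R = Algebra.adjoin K
      ((Set.range fun p : Fin d × Fin d => U p.1 p.2) ∪ {(U.det)⁻¹}))
    {T : Type*} [CommRing T] [Algebra F T] (σ : T →+* T)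
    (hσ : ∀ (x : F) (t : T), σ (x • t) = τ x • σ t)
    (j : F →+* T) (hj : ∀ y, σ (j y) = j (τ y)) (hjK : ∀ x ∈ K, j x = algebraMap F T x)
    (f : F) (hf : f ∈ R) :
    ∃ (s : Set T) (r : s →₀ R), (∀ c ∈ s, σ c = c) ∧ LinearIndependent k (fun c : s => (c : T)) ∧
      j f = r.sum fun c x => (x : F) • (c : T) := by
  have hσa : ∀ x : F, σ (algebraMap F T x) = algebraMap F T (τ x) := by
    intro x
    have := hσ x 1
    simpa [Algebra.smul_def] using this
  let C : Submodule k T :=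
    { carrier := {c | σ c = c}
      add_mem' := by
        intro a b ha hb
        simp only [Set.mem_ofPred_eq] at *
        rw [map_add, ha, hb]
      zero_mem' := map_zero σ
      smul_mem' := by
        intro x t ht
        simp only [Set.mem_ofPred_eq] at *
        rw [Subfield.smul_def, hσ, ht, (hk _).1 x.2] }
  have hC : ∀ c, c ∈ C ↔ σ c = c := fun c => Iff.rfl
  obtain ⟨s, hsC, hspan, hli⟩ := exists_linearIndependent k (C : Set T)
  -- the R-span of C
  let P : Subalgebra R T := Algebra.adjoin R (C : Set T)
  have hks : ∀ c ∈ Submodule.span k s,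
      c ∈ Submodule.span R (Set.range (fun c : s => (c : T))) := by
    intro c hc
    induction hc using Submodule.span_induction with
    | mem x hx => exact Submodule.subset_span ⟨⟨x, hx⟩, rfl⟩
    | zero => exact Submodule.zero_mem _
    | add x y _ _ hx hy => exact Submodule.add_mem _ hx hy
    | smul a x _ hx =>
      exact Submodule.smul_mem _ (⟨(a : F), R.algebraMap_mem ⟨a, hkK a.2⟩⟩ : R) hx
  have hPs : ∀ x ∈ P, x ∈ Submodule.span R (Set.range (fun c : s => (c : T))) := by
    intro x hx
    have h1 : x ∈ Subalgebra.toSubmodule P := hx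
    rw [Algebra.adjoin_eq_span] at h1
    refine Submodule.span_le.2 ?_ h1
    intro c hc
    have hcC : c ∈ C := by
      induction hc using Submonoid.closure_induction with
      | mem x hx => exact hx
      | one => exact map_one σ
      | mul x y _ _ hx hy => rw [hC] at *; rw [map_mul, hx, hy]
    have h2 : c ∈ Submodule.span k s := by rw [hspan]; exact Submodule.subset_span hcC
    exact hks c h2
  have hjR : ∀ y ∈ R, j y ∈ P := by
    have hPa : ∀ x ∈ R, algebraMap F T x ∈ P := fun x hx => P.algebraMap_mem ⟨x, hx⟩
    have hPc : ∀ c, σ c = c → c ∈ P := fun c hc => Algebra.subset_adjoin hc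
    have hUR : ∀ i l, U i l ∈ R := fun i l => by
      rw [hR]; exact Algebra.subset_adjoin (Or.inl ⟨(i, l), rfl⟩)
    have hDR : (U.det)⁻¹ ∈ R := by
      rw [hR]; exact Algebra.subset_adjoin (Or.inr rfl)
    have hdet : τ U.det = A.det * U.det := by
      rw [← Matrix.det_mul, ← hU]; exact RingEquiv.map_det τ U
    have hAdK : A.det ∈ K := by
      rw [Matrix.det_apply]
      exact sum_mem fun p _ => zsmul_mem (prod_mem fun i _ => hA _ _) _
    intro y hy
    rw [hR] at hy
    induction hy using Algebra.adjoin_induction with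
    | mem x hx =>
      rcases hx with ⟨⟨i, l⟩, rfl⟩ | hx
      · let Ua := U.map (algebraMap F T)
        let Ui := U⁻¹.map (algebraMap F T)
        let Uj := U.map j
        have hUu : IsUnit U.det := isUnit_iff_ne_zero.2 hUdet
        have h1 : Ua * Ui = 1 := by
          rw [← Matrix.map_mul, Matrix.mul_nonsing_inv U hUu]
          simp
        have h1' : Ui * Ua = 1 := by
          rw [← Matrix.map_mul, Matrix.nonsing_inv_mul U hUu]
          simp
        let Aa := A.map (algebraMap F T)
        have hAj : A.map j = Aa := by ext i l; exact hjK _ (hA i l)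
        have h2 : Ua.map σ = Aa * Ua := by
          rw [← Matrix.map_mul, ← hU]; ext i l; exact hσa _
        have h3 : Uj.map σ = Aa * Uj := by
          rw [← hAj, ← Matrix.map_mul, ← hU]; ext i l; exact hj _
        have h4 : Uj = Ua * (Ui * Uj) := by rw [← mul_assoc, h1, one_mul]
        have h6 : Ua.map σ * Ui.map σ = 1 := by
          rw [← Matrix.map_mul, h1]; simp
        have h6' : Ui.map σ * Ua.map σ = 1 := by
          rw [← Matrix.map_mul, h1']; simp
        have h5 : (Ui * Uj).map σ = Ui * Uj := by
          calc (Ui * Uj).map σ = Ui.map σ * Uj.map σ := Matrix.map_mul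
            _ = Ui.map σ * (Ua.map σ * (Ui * Uj)) := by
              rw [h3, h2, mul_assoc, ← h4]
            _ = _ := by rw [← mul_assoc, h6', one_mul]
        change Uj i l ∈ P
        rw [h4, Matrix.mul_apply]
        refine sum_mem fun q _ => mul_mem (hPa _ (hUR i q)) (hPc _ ?_)
        exact congrFun (congrFun h5 q) l
      · rw [Set.mem_singleton_iff] at hx
        subst hx
        have h1 : j (U.det)⁻¹ = algebraMap F T (U.det)⁻¹ *
            (algebraMap F T U.det * j (U.det)⁻¹) := by
          rw [← mul_assoc, ← map_mul, inv_mul_cancel₀ hUdet, map_one, one_mul]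
        rw [h1]
        refine mul_mem (hPa _ hDR) (hPc _ ?_)
        rw [map_mul, hσa, hj, map_inv₀, hdet, mul_inv, map_mul, map_mul,
          hjK _ (inv_mem hAdK)]
        have : algebraMap F T A.det * algebraMap F T A.det⁻¹ = 1 := by
          rw [← map_mul, mul_inv_cancel₀ hAdet, map_one]
        linear_combination (algebraMap F T U.det * j (U.det)⁻¹) * this
    | algebraMap x =>
      have := hjK x x.2
      change j (x : F) ∈ P
      rw [this]
      exact hPa _ (R.algebraMap_mem x)
    | add x y _ _ hx hy => rw [map_add]; exact add_mem hx hy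
    | mul x y _ _ hx hy => rw [map_mul]; exact mul_mem hx hy
  obtain ⟨r, hr⟩ := Finsupp.mem_span_range_iff_exists_finsupp.1 (hPs _ (hjR f hf))
  exact ⟨s, r, fun c hc => hsC hc, hli, hr.symm⟩

theorem upper {F : Type*} [Field F] (τ : F ≃+* F)
    (k : Subfield F) (hk : ∀ a : F, a ∈ k ↔ τ a = a)
    (m : ℕ) (a : Fin (m + 1) → F) (ham : a (Fin.last m) ≠ 0)
    (W : Submodule k F) (hW : ∀ y ∈ W, ∑ i : Fin (m + 1), a i * (⇑τ)^[(i : ℕ)] y = 0) :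
    Module.rank k W ≤ m := by
  let S : Submodule F (ℕ → F) :=
    { carrier := {g | ∀ n, ∑ i : Fin (m + 1), (⇑τ)^[n] (a i) * g (n + i) = 0}
      add_mem' := by
        intro g h hg hh n
        simp only [Pi.add_apply, mul_add, Finset.sum_add_distrib]
        rw [hg n, hh n, add_zero]
      zero_mem' := by intro n; simp
      smul_mem' := by
        intro x g hg n
        have := hg n
        simp only [Pi.smul_apply, smul_eq_mul]
        rw [← mul_zero x, ← this, Finset.mul_sum]
        exact Finset.sum_congr rfl fun i _ => by ring }
  let L : S →ₗ[F] (Fin m → F) :=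
    { toFun := fun g i => g.1 i
      map_add' := fun _ _ => rfl
      map_smul' := fun _ _ => rfl }
  have hit : ∀ (n : ℕ) (x : F), (⇑τ)^[n] x = (τ ^ n : F ≃+* F) x := by
    intro n x
    induction n with
    | zero => rfl
    | succ n ih => rw [Function.iterate_succ_apply', ih, pow_succ']; rfl
  have hL : Function.Injective L := by
    rw [injective_iff_map_eq_zero]
    intro g hg
    ext n
    change g.1 n = 0
    induction n using Nat.strong_induction_on with
    | _ n ih =>
      by_cases hn : n < m
      · exact congrFun hg ⟨n, hn⟩
      · obtain ⟨q, rfl⟩ := Nat.exists_eq_add_of_le' (not_lt.1 hn)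
        have := g.2 q
        rw [Fin.sum_univ_castSucc, Finset.sum_eq_zero, zero_add] at this
        · rcases mul_eq_zero.1 this with h | h
          · rw [hit, map_eq_zero_iff _ (τ ^ q : F ≃+* F).injective] at h
            exact absurd h ham
          · simpa using h
        · intro i _
          rw [ih _ (by simp), mul_zero]
  apply rank_le
  intro s hs
  let G : W → S := fun y => ⟨fun n => (⇑τ)^[n] (y : F), by
    intro n
    have := congrArg (τ ^ n : F ≃+* F) (hW y y.2)
    rw [map_sum, map_zero] at this
    rw [← this]
    refine Finset.sum_congr rfl fun i _ => ?_
    rw [map_mul, ← hit, ← hit, ← Function.iterate_add_apply]⟩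
  let σ : (ℕ → F) →+ (ℕ → F) :=
    { toFun := fun g n => τ.symm (g (n + 1))
      map_zero' := by ext; simp
      map_add' := by intro g h; ext; simp }
  have h1 : LinearIndependent F (fun i : s => (G i : ℕ → F)) := by
    refine fixed_indep τ.symm k (fun x => ?_) σ (fun x t => ?_) _ (fun i => ?_) ?_
    · rw [hk, RingEquiv.symm_apply_eq, eq_comm]
    · ext n; simp [σ]
    · ext n
      change τ.symm ((⇑τ)^[n+1] ((i : W) : F)) = (⇑τ)^[n] ((i : W) : F)
      rw [Function.iterate_succ_apply', RingEquiv.symm_apply_apply]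
    · let ev : (ℕ → F) →ₗ[k] F := (LinearMap.proj 0 : (ℕ → F) →ₗ[F] F).restrictScalars k
      refine LinearIndependent.of_comp ev ?_
      exact hs.map' W.subtype (Submodule.ker_subtype _)
  have h2 : LinearIndependent F (fun i : s => G i) :=
    LinearIndependent.of_comp S.subtype h1
  have h3 := h2.map' L (LinearMap.ker_eq_bot.2 hL)
  have := h3.fintype_card_le_finrank
  simpa using this

/-- If `f` in the Picard-Vessiot ring `R` satisfies a linear difference equation of minimal
order `m` over `K`, then the solutions of this equation in `R` form a `k`-vector space of
dimension exactly `m`. -/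
theorem solution_space_dimension_of_minimal_equation
    (F : Type*) [Field F] (τ : F ≃+* F)
    (k : Subfield F) (hk : ∀ a : F, a ∈ k ↔ τ a = a)
    (K : Subfield F) (hkK : (k : Set F) ⊆ (K : Set F)) (hτK : ∀ a : F, a ∈ K ↔ τ a ∈ K)
    (d : ℕ) (A U : Matrix (Fin d) (Fin d) F)
    (hA : ∀ i j, A i j ∈ K) (hAdet : A.det ≠ 0) (hUdet : U.det ≠ 0)
    (hU : U.map τ = A * U)
    (R : Subalgebra K F)
    (hR : R = Algebra.adjoin K
      ((Set.range fun p : Fin d × Fin d => U p.1 p.2) ∪ {(U.det)⁻¹}))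
    (f : F) (hf : f ∈ R)
    (m : ℕ) (a : Fin (m + 1) → F)
    (haK : ∀ i, a i ∈ K) (ham : a (Fin.last m) ≠ 0)
    (hrel : ∑ i : Fin (m + 1), a i * (⇑τ)^[(i : ℕ)] f = 0)
    (hmin : ∀ m' : ℕ, m' < m → ∀ b : Fin (m' + 1) → F, (∀ i, b i ∈ K) →
      (∃ i, b i ≠ 0) → ∑ i : Fin (m' + 1), b i * (⇑τ)^[(i : ℕ)] f ≠ 0) :
    ∃ W : Submodule k F,
      (W : Set F) = { y : F | y ∈ R ∧ ∑ i : Fin (m + 1), a i * (⇑τ)^[(i : ℕ)] y = 0 } ∧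
      Module.finrank k W = m := by
  classical
  let W : Submodule k F :=
    { carrier := { y : F | y ∈ R ∧ ∑ i : Fin (m + 1), a i * (⇑τ)^[(i : ℕ)] y = 0 }
      add_mem' := by
        rintro x y ⟨hx, hx'⟩ ⟨hy, hy'⟩
        refine ⟨add_mem hx hy, ?_⟩
        simp only [iterate_map_add, mul_add, Finset.sum_add_distrib]
        rw [hx', hy', add_zero]
      zero_mem' := ⟨zero_mem _, by simp only [iterate_map_zero, mul_zero, Finset.sum_const_zero]⟩
      smul_mem' := by
        rintro c y ⟨hy, hy'⟩
        refine ⟨mul_mem (R.algebraMap_mem ⟨(c : F), hkK c.2⟩) hy, ?_⟩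
        have hc : ∀ n, (⇑τ)^[n] (c • y) = c * (⇑τ)^[n] y := fun n => by
          rw [Subfield.smul_def, smul_eq_mul, iterate_map_mul,
            Function.iterate_fixed ((hk _).1 c.2)]
        simp only [hc]
        rw [← mul_zero (c : F), ← hy', Finset.mul_sum]
        exact Finset.sum_congr rfl fun i _ => by ring }
  refine ⟨W, rfl, ?_⟩
  have hup : Module.rank k W ≤ m := upper τ k hk m a ham W fun y hy => hy.2
  have hfin : Module.Finite k W :=
    Module.rank_lt_aleph0_iff.1 (hup.trans_lt (Cardinal.natCast_lt_aleph0))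
  refine le_antisymm (Module.finrank_le_of_rank_le hup) ?_
  by_contra hlt
  rw [not_le] at hlt
  obtain ⟨σ, hσ, hσr⟩ := exists_T τ K hτK
  let j : F →+* F ⊗[K] F := (Algebra.TensorProduct.includeRight : F →ₐ[K] F ⊗[K] F).toRingHom
  have hjK : ∀ x ∈ K, j x = algebraMap F (F ⊗[K] F) x := by
    intro x hx
    change (1 : F) ⊗ₜ[K] x = x ⊗ₜ 1
    have := TensorProduct.smul_tmul (R := K) (⟨x, hx⟩ : K) (1:F) (1:F)
    simpa [Subfield.smul_def] using this.symm
  have hj : ∀ y, σ (j y) = j (τ y) := hσr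
  obtain ⟨s, r, hs, hli, hr⟩ := coaction τ k hk K hkK d A U hA hAdet hUdet hU R hR σ hσ j hj hjK f hf
  have hliF : LinearIndependent F (fun c : s => (c : F ⊗[K] F)) :=
    fixed_indep τ k hk σ.toAddMonoidHom hσ _ (fun c => hs c c.2) hli
  have hrn : ∀ n : ℕ, j ((⇑τ)^[n] f) = ∑ c ∈ r.support, (⇑τ)^[n] (r c : F) • (c : F ⊗[K] F) := by
    intro n
    induction n with
    | zero => exact hr
    | succ n ih =>
      rw [Function.iterate_succ_apply', ← hj, ih, map_sum]
      refine Finset.sum_congr rfl fun c _ => ?_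
      rw [hσ, hs c c.2, Function.iterate_succ_apply']
  have hswap : ∀ (p : ℕ) (b : Fin p → F), ∑ i : Fin p, b i • j ((⇑τ)^[(i : ℕ)] f) =
      ∑ c ∈ r.support, (∑ i : Fin p, b i * (⇑τ)^[(i : ℕ)] (r c : F)) • (c : F ⊗[K] F) := by
    intro p b
    simp only [hrn, Finset.smul_sum, Finset.sum_smul, smul_smul]
    exact Finset.sum_comm
  have hrW : ∀ c ∈ r.support, (r c : F) ∈ W := by
    have h0 : ∑ i : Fin (m + 1), a i • j ((⇑τ)^[(i : ℕ)] f) = 0 := by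
      rw [← map_zero j, ← hrel, map_sum]
      refine Finset.sum_congr rfl fun i _ => ?_
      rw [map_mul, hjK _ (haK i)]
      exact Algebra.smul_def (A := F ⊗[K] F) _ _
    rw [hswap] at h0
    intro c hc
    exact ⟨(r c).2, linearIndependent_iff'.1 hliF _ _ h0 c hc⟩
  -- a nonzero operator of order less than `m` killing `W`
  let w := Module.finBasis k W
  let Φ : (Fin m → F) →ₗ[F] (Fin (Module.finrank k W) → F) :=
    { toFun := fun b l => ∑ i : Fin m, b i * (⇑τ)^[(i : ℕ)] (w l : F)
      map_add' := by
        intro b b'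
        ext l
        simp only [Pi.add_apply, add_mul, Finset.sum_add_distrib]
      map_smul' := by
        intro x b
        ext l
        simp only [Pi.smul_apply, smul_eq_mul, RingHom.id_apply, Finset.mul_sum, mul_assoc] }
  have hker : LinearMap.ker Φ ≠ ⊥ := LinearMap.ker_ne_bot_of_finrank_lt (by simpa using hlt)
  obtain ⟨b, hbk, hb0⟩ := Submodule.exists_mem_ne_zero_of_ne_bot hker
  have hbw : ∀ l, ∑ i : Fin m, b i * (⇑τ)^[(i : ℕ)] (w l : F) = 0 := fun l => congrFun hbk l
  have hbW : ∀ y : W, ∑ i : Fin m, b i * (⇑τ)^[(i : ℕ)] (y : F) = 0 := by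
    intro y
    have hy : y ∈ Submodule.span k (Set.range w) := by rw [w.span_eq]; trivial
    induction hy using Submodule.span_induction with
    | mem x hx => obtain ⟨l, rfl⟩ := hx; exact hbw l
    | zero => simp only [ZeroMemClass.coe_zero, iterate_map_zero, mul_zero, Finset.sum_const_zero]
    | add x y _ _ hx hy =>
      simp only [Submodule.coe_add, iterate_map_add, mul_add, Finset.sum_add_distrib]
      rw [hx, hy, add_zero]
    | smul c y _ hy =>
      have hc : ∀ n, (⇑τ)^[n] ((c • y : W) : F) = c * (⇑τ)^[n] (y : F) := fun n => by
        rw [Submodule.coe_smul, Subfield.smul_def, smul_eq_mul, iterate_map_mul,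
          Function.iterate_fixed ((hk _).1 c.2)]
      simp only [hc]
      rw [← mul_zero (c : F), ← hy, Finset.mul_sum]
      exact Finset.sum_congr rfl fun i _ => by ring
  have hzero : ∑ i : Fin m, b i • j ((⇑τ)^[(i : ℕ)] f) = 0 := by
    rw [hswap]
    refine Finset.sum_eq_zero fun c hc => ?_
    rw [hbW ⟨_, hrW c hc⟩, zero_smul]
  have hfind : LinearIndependent K (fun i : Fin m => (⇑τ)^[(i : ℕ)] f) := by
    rw [Fintype.linearIndependent_iff]
    intro g hg
    cases m with
    | zero => exact fun i => i.elim0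
    | succ m' =>
      by_contra hne
      push Not at hne
      obtain ⟨i, hi⟩ := hne
      refine hmin m' (Nat.lt_succ_self _) (fun i => (g i : F)) (fun i => (g i).2) ⟨i, ?_⟩ hg
      exact fun h => hi (Subtype.ext h)
  have hTind := tensor_indep K _ hfind
  exact hb0 (funext fun i => Fintype.linearIndependent_iff.1 hTind b hzero i)
end

section
/- Let k be a field of characteristic zero and C ⊆ k an algebraically closed subfield, and let q ∈ C be nonzero and not a root of unity. Consider the field k(X) of rational functions over k with the derivation ∂ = X·d/dX, and let τ : k(X) → k(X) be the k-algebra automorphism determined by X ↦ qX. Let f ∈ C(X) be a rational function with coefficients in C, viewed inside k(X). If there exist n ≥ 0, λ₀, …, λₙ ∈ k, not all zero, and g ∈ k(X) such that λ₀f + λ₁∂(f) + ⋯ + λₙ∂ⁿ(f) = τ(g) − g, then there exist μ₀, …, μₙ ∈ C, not all zero, and h ∈ C(X) such that μ₀f + μ₁∂(f) + ⋯ + μₙ∂ⁿ(f) = h(qX) − h(X). -/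
set_option synthInstance.maxHeartbeats 400000
set_option maxHeartbeats 1000000

/-- Two elements are specializations of the same fraction. -/
def QdRel {R K : Type*} [CommRing R] [Field K] (α β : R →+* K) (u v : K) : Prop :=
  ∃ p s : R, α s ≠ 0 ∧ β s ≠ 0 ∧ u * α s = α p ∧ v * β s = β p

section
variable {R K : Type*} [CommRing R] [Field K] {α β : R →+* K}

theorem QdRel.of (r : R) : QdRel α β (α r) (β r) := ⟨r, 1, by simp, by simp, by simp, by simp⟩

theorem QdRel.add {u v u' v' : K} (h : QdRel α β u v) (h' : QdRel α β u' v') :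
    QdRel α β (u + u') (v + v') := by
  obtain ⟨p, s, h1, h2, h3, h4⟩ := h
  obtain ⟨p', s', h1', h2', h3', h4'⟩ := h'
  refine ⟨p * s' + p' * s, s * s', by simp [*], by simp [*], ?_, ?_⟩
  · simp only [map_mul, map_add, ← h3, ← h3']; ring
  · simp only [map_mul, map_add, ← h4, ← h4']; ring

theorem QdRel.mul {u v u' v' : K} (h : QdRel α β u v) (h' : QdRel α β u' v') :
    QdRel α β (u * u') (v * v') := by
  obtain ⟨p, s, h1, h2, h3, h4⟩ := h
  obtain ⟨p', s', h1', h2', h3', h4'⟩ := h'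
  refine ⟨p * p', s * s', by simp [*], by simp [*], ?_, ?_⟩
  · simp only [map_mul, ← h3, ← h3']; ring
  · simp only [map_mul, ← h4, ← h4']; ring

theorem QdRel.neg {u v : K} (h : QdRel α β u v) : QdRel α β (-u) (-v) := by
  simpa using (QdRel.of (α := α) (β := β) (-1)).mul h

theorem QdRel.sub {u v u' v' : K} (h : QdRel α β u v) (h' : QdRel α β u' v') :
    QdRel α β (u - u') (v - v') := by
  rw [sub_eq_add_neg, sub_eq_add_neg]; exact h.add h'.neg

theorem QdRel.inv {u : K} (h : QdRel α β u u) : QdRel α β u⁻¹ u⁻¹ := by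
  by_cases hu : u = 0
  · subst hu; simpa using h
  obtain ⟨p, s, h1, h2, h3, h4⟩ := h
  refine ⟨s, p, ?_, ?_, ?_, ?_⟩
  · rw [← h3]; exact mul_ne_zero hu h1
  · rw [← h4]; exact mul_ne_zero hu h2
  · rw [← h3]; field_simp
  · rw [← h4]; field_simp

theorem QdRel.sum {ι : Type*} (t : Finset ι) {u v : ι → K}
    (h : ∀ i, QdRel α β (u i) (v i)) : QdRel α β (∑ i ∈ t, u i) (∑ i ∈ t, v i) := by
  classical
  induction t using Finset.induction_on with
  | empty => simpa using QdRel.of (α := α) (β := β) 0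
  | insert a t ha ih => rw [Finset.sum_insert ha, Finset.sum_insert ha]; exact (h a).add ih

theorem QdRel.zero (hα : Function.Injective α) {v : K} (h : QdRel α β 0 v) : v = 0 := by
  obtain ⟨p, s, h1, h2, h3, h4⟩ := h
  have : p = 0 := hα (by simpa using h3.symm)
  subst this
  simpa [h2] using h4

theorem QdRel.map {τ : K →+* K} {σ : R →+* R} (ha : ∀ r, τ (α r) = α (σ r))
    (hb : ∀ r, τ (β r) = β (σ r)) {u v : K} (h : QdRel α β u v) : QdRel α β (τ u) (τ v) := by
  obtain ⟨p, s, h1, h2, h3, h4⟩ := h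
  refine ⟨σ p, σ s, ?_, ?_, ?_, ?_⟩
  · rw [← ha]; simpa using h1
  · rw [← hb]; simpa using h2
  · rw [← ha, ← ha, ← map_mul, h3]
  · rw [← hb, ← hb, ← map_mul, h4]
end

theorem qd_exists_hom {k : Type*} [Field k] (C : Subfield k) [IsAlgClosed C] (S : Set k)
    (hS : S.Finite) : Nonempty (Algebra.adjoin C S →ₐ[C] C) := by
  have hfg : (Algebra.adjoin C S).FG := Subalgebra.fg_def.2 ⟨S, hS, rfl⟩
  have : Algebra.FiniteType C (Algebra.adjoin C S) := (Subalgebra.fg_iff_finiteType _).1 hfg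
  obtain ⟨m, hm⟩ := Ideal.exists_maximal (Algebra.adjoin C S)
  let _ : Field (Algebra.adjoin C S ⧸ m) := Ideal.Quotient.field m
  have : Algebra.FiniteType C (Algebra.adjoin C S ⧸ m) :=
    Algebra.FiniteType.of_surjective (Ideal.Quotient.mkₐ C m) (Ideal.Quotient.mkₐ_surjective C m)
  have : Module.Finite C (Algebra.adjoin C S ⧸ m) :=
    finite_of_finite_type_of_isJacobsonRing C (Algebra.adjoin C S ⧸ m)
  exact ⟨(IsAlgClosed.lift : (Algebra.adjoin C S ⧸ m) →ₐ[C] C).comp (Ideal.Quotient.mkₐ C m)⟩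

open Polynomial in
theorem qd_tau {k A : Type*} [Field k] [CommRing A] (a : A →+* k) (q : k) (qA : A)
    (hqA : a qA = q) (τ : RatFunc k →ₐ[k] RatFunc k)
    (hτ : τ RatFunc.X = algebraMap k (RatFunc k) q * RatFunc.X) (p : A[X]) :
    τ (algebraMap k[X] (RatFunc k) (p.map a)) =
      algebraMap k[X] (RatFunc k) ((Polynomial.compRingHom (C qA * X) p).map a) := by
  have key : ((τ : RatFunc k →+* RatFunc k).comp (algebraMap k[X] (RatFunc k))).comp (mapRingHom a)
      = ((algebraMap k[X] (RatFunc k)).comp (mapRingHom a)).comp (compRingHom (C qA * X)) := by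
    apply Polynomial.ringHom_ext
    · intro x
      simp [← RatFunc.algebraMap_C, RatFunc.algebraMap_eq_C]
      exact τ.commutes (a x)
    · simp [hτ, hqA, RatFunc.algebraMap_eq_C]
  exact congrArg (fun F => F p) key

theorem qd_D_mem {k : Type*} [Field k] (C : Subfield k)
    (D : Derivation k (RatFunc k) (RatFunc k)) (hD : D RatFunc.X = RatFunc.X)
    (CX : Subfield (RatFunc k))
    (hCX : CX = Subfield.closure
      { u : RatFunc k | ∃ p : Polynomial k, (∀ i, p.coeff i ∈ C) ∧
          u = algebraMap (Polynomial k) (RatFunc k) p })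
    (f : RatFunc k) (hf : f ∈ CX) : D f ∈ CX := by
  have hg : ∀ p : Polynomial k, (∀ i, p.coeff i ∈ C) →
      algebraMap (Polynomial k) (RatFunc k) p ∈ CX := by
    intro p hp; rw [hCX]; exact Subfield.subset_closure ⟨p, hp, rfl⟩
  have hX : (RatFunc.X : RatFunc k) ∈ CX := by
    rw [← RatFunc.algebraMap_X]
    apply hg; intro i; rw [Polynomial.coeff_X]; split_ifs; exacts [C.one_mem, C.zero_mem]
  have hc : ∀ c ∈ C, RatFunc.C c ∈ CX := by
    intro c hc
    rw [← RatFunc.algebraMap_C]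
    apply hg; intro i; rw [Polynomial.coeff_C]; split_ifs; exacts [hc, C.zero_mem]
  rw [hCX] at hf
  induction hf using Subfield.closure_induction with
  | mem x hx =>
    obtain ⟨p, hp, rfl⟩ := hx
    rw [p.as_sum_range_C_mul_X_pow, map_sum, map_sum]
    refine sum_mem fun i _ => ?_
    have hDC : D (RatFunc.C (p.coeff i)) = 0 := by
      rw [← RatFunc.algebraMap_eq_C]; exact D.map_algebraMap _
    rw [map_mul, map_pow, RatFunc.algebraMap_C, RatFunc.algebraMap_X, D.leibniz, hDC, smul_zero,
      add_zero, D.leibniz_pow, hD, smul_eq_mul, smul_eq_mul]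
    exact mul_mem (hc _ (hp i)) (nsmul_mem (mul_mem (pow_mem hX _) hX) _)
  | one => simp
  | add x y hx hy h1 h2 => rw [map_add]; exact add_mem h1 h2
  | neg x hx h1 => rw [map_neg]; exact neg_mem h1
  | inv x hx h1 =>
    rw [← hCX] at hx
    rw [D.leibniz_inv, smul_eq_mul]
    exact mul_mem (neg_mem (pow_mem (inv_mem hx) _)) h1
  | mul x y hx hy h1 h2 =>
    rw [← hCX] at hx hy
    rw [D.leibniz, smul_eq_mul, smul_eq_mul]
    exact add_mem (mul_mem hx h2) (mul_mem hy h1)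

/-- Descent of constants for `q`-difference equations: if some nonzero `k`-linear combination
of `f, ∂f, …, ∂ⁿf` (with `f ∈ C(X)` and `∂ = X·d/dX`) is of the form `g(qX) - g(X)` for some
`g ∈ k(X)`, then this already happens with coefficients in `C` and `h ∈ C(X)`, where
`C ⊆ k` is algebraically closed and `q ∈ C` is nonzero and not a root of unity. -/
theorem descent_of_constants_q_difference
    (k : Type*) [Field k] [CharZero k]
    (C : Subfield k) [IsAlgClosed C]
    (q : k) (hqC : q ∈ C) (hq0 : q ≠ 0) (hqroot : ∀ n : ℕ, 1 ≤ n → q ^ n ≠ 1)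
    (D : Derivation k (RatFunc k) (RatFunc k)) (hD : D RatFunc.X = RatFunc.X)
    (τ : RatFunc k →ₐ[k] RatFunc k)
    (hτ : τ RatFunc.X = algebraMap k (RatFunc k) q * RatFunc.X)
    (CX : Subfield (RatFunc k))
    (hCX : CX = Subfield.closure
      { u : RatFunc k | ∃ p : Polynomial k, (∀ i, p.coeff i ∈ C) ∧
          u = algebraMap (Polynomial k) (RatFunc k) p })
    (f : RatFunc k) (hf : f ∈ CX)
    (n : ℕ) (lam : Fin (n + 1) → k) (hlam : ∃ i, lam i ≠ 0) (g : RatFunc k)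
    (h : ∑ i : Fin (n + 1), lam i • (⇑D)^[(i : ℕ)] f = τ g - g) :
    ∃ mu : Fin (n + 1) → k, (∀ i, mu i ∈ C) ∧ (∃ i, mu i ≠ 0) ∧
      ∃ h' ∈ CX, ∑ i : Fin (n + 1), mu i • (⇑D)^[(i : ℕ)] f = τ h' - h' := by
  classical
  obtain ⟨j, hj⟩ := hlam
  set S : Set k := (g.num.coeffs : Set k) ∪ g.denom.coeffs ∪ Set.range lam ∪ {(lam j)⁻¹} with hSdef
  have hS : S.Finite := by
    refine ((Set.Finite.union (Finset.finite_toSet _) (Finset.finite_toSet _)).union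
      (Set.finite_range _)).union (Set.finite_singleton _)
  obtain ⟨φ⟩ := qd_exists_hom C S hS
  let A := Algebra.adjoin C S
  let a : A →+* k := A.val.toRingHom
  have ha : Function.Injective a := Subtype.val_injective
  let b : A →+* k := C.subtype.comp φ.toRingHom
  have hsub : ∀ x ∈ S, ∃ y : A, a y = x := fun x hx => ⟨⟨x, Algebra.subset_adjoin hx⟩, rfl⟩
  have haC : ∀ c : C, a (algebraMap C A c) = c := fun c => rfl
  have hbC : ∀ c : C, b (algebraMap C A c) = c := fun c => by
    change ((φ (algebraMap C A c) : C) : k) = c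
    rw [φ.commutes]; rfl
  have hbmem : ∀ x, b x ∈ C := fun x => (φ x).2
  have hlift : ∀ p : Polynomial k, (∀ x ∈ p.coeffs, x ∈ Set.range a) →
      ∃ P : Polynomial A, P.map a = p := by
    intro p hp
    have : p ∈ Polynomial.lifts a := by
      rw [Polynomial.lifts_iff_coeff_lifts]
      intro i
      by_cases h0 : p.coeff i = 0
      · rw [h0]; exact ⟨0, map_zero a⟩
      · exact hp _ (Polynomial.coeff_mem_coeffs h0)
    exact (Polynomial.mem_lifts p).1 this
  obtain ⟨P, hP⟩ := hlift g.num (fun x hx => hsub x (by simp [hSdef, hx]))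
  obtain ⟨Q, hQ⟩ := hlift g.denom (fun x hx => hsub x (by simp [hSdef, hx]))
  choose L hL using fun i => hsub (lam i) (by simp [hSdef])
  obtain ⟨M, hM⟩ := hsub (lam j)⁻¹ (by simp [hSdef])
  have hLM : L j * M = 1 := ha (by rw [map_mul, hL, hM, map_one, mul_inv_cancel₀ hj])
  have hQm : Q.Monic := by
    rw [ha.monic_map_iff, hQ]; exact RatFunc.monic_denom g
  let ι := algebraMap (Polynomial k) (RatFunc k)
  have hι : Function.Injective ι := RatFunc.algebraMap_injective k
  let α : Polynomial A →+* RatFunc k := ι.comp (Polynomial.mapRingHom a)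
  let β : Polynomial A →+* RatFunc k := ι.comp (Polynomial.mapRingHom b)
  have hα : Function.Injective α := hι.comp (Polynomial.map_injective a ha)
  have hβQ : β Q ≠ 0 := by
    change ι (Q.map b) ≠ 0
    rw [Ne, map_eq_zero_iff ι hι]
    exact (hQm.map b).ne_zero
  have hαQ : α Q ≠ 0 := by
    rw [Ne, map_eq_zero_iff α hα]; exact hQm.ne_zero
  have hβmem : ∀ p, β p ∈ CX := by
    intro p
    rw [hCX]
    exact Subfield.subset_closure ⟨p.map b, fun i => by
      rw [Polynomial.coeff_map]; exact hbmem _, rfl⟩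
  have hrelg : QdRel (R := Polynomial A) (K := RatFunc k) α β g (β P / β Q) := by
    refine ⟨P, Q, hαQ, hβQ, ?_, div_mul_cancel₀ _ hβQ⟩
    change g * ι (Q.map a) = ι (P.map a)
    have h0 : ι (Q.map a) ≠ 0 := hαQ
    rw [← eq_div_iff h0, hP, hQ]
    exact (RatFunc.num_div_denom g).symm
  have hdiag : ∀ u ∈ CX, QdRel (R := Polynomial A) α β u u := by
    intro u hu
    rw [hCX] at hu
    induction hu using Subfield.closure_induction with
    | mem x hx =>
      obtain ⟨p, hp, rfl⟩ := hx
      have : ∃ p' : Polynomial C, p'.map C.subtype = p := by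
        have : p ∈ Polynomial.lifts C.subtype := by
          rw [Polynomial.lifts_iff_coeff_lifts]
          intro i
          exact ⟨⟨_, hp i⟩, rfl⟩
        exact (Polynomial.mem_lifts p).1 this
      obtain ⟨p', rfl⟩ := this
      have := QdRel.of (R := Polynomial A) (α := α) (β := β) (p'.map (algebraMap C A))
      have e1 : α (p'.map (algebraMap C A)) = ι (p'.map C.subtype) := by
        change ι ((p'.map (algebraMap C A)).map a) = _
        rw [Polynomial.map_map]; rfl
      have e2 : β (p'.map (algebraMap C A)) = ι (p'.map C.subtype) := by
        change ι ((p'.map (algebraMap C A)).map b) = _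
        rw [Polynomial.map_map]
        congr 2
        exact RingHom.ext hbC
      rwa [e1, e2] at this
    | one => simpa using QdRel.of (R := Polynomial A) (α := α) (β := β) 1
    | add x y hx hy h1 h2 => exact h1.add h2
    | neg x hx h1 => exact h1.neg
    | inv x hx h1 => exact h1.inv
    | mul x y hx hy h1 h2 => exact h1.mul h2
  have hit : ∀ i : ℕ, (⇑D)^[i] f ∈ CX := by
    intro i
    induction i with
    | zero => exact hf
    | succ i ih => rw [Function.iterate_succ_apply']; exact qd_D_mem C D hD CX hCX _ ih
  have hrelτ : QdRel (R := Polynomial A) α β (τ g) (τ (β P / β Q)) :=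
    QdRel.map (R := Polynomial A) (τ := (τ : RatFunc k →+* RatFunc k))
      (σ := Polynomial.compRingHom (Polynomial.C (algebraMap C A ⟨q, hqC⟩) * Polynomial.X))
      (fun r => qd_tau a q _ (haC _) τ hτ r) (fun r => qd_tau b q _ (hbC _) τ hτ r) hrelg
  have hsum : QdRel (R := Polynomial A) α β (∑ i : Fin (n + 1), lam i • (⇑D)^[(i : ℕ)] f)
      (∑ i : Fin (n + 1), b (L i) • (⇑D)^[(i : ℕ)] f) := by
    refine QdRel.sum _ fun i => ?_
    have h1 := (QdRel.of (R := Polynomial A) (α := α) (β := β) (Polynomial.C (L i))).mul (hdiag _ (hit i))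
    have e1 : α (Polynomial.C (L i)) = RatFunc.C (lam i) := by
      change ι ((Polynomial.C (L i)).map a) = _
      rw [Polynomial.map_C, hL]; exact RatFunc.algebraMap_C _
    have e2 : β (Polynomial.C (L i)) = RatFunc.C (b (L i)) := by
      change ι ((Polynomial.C (L i)).map b) = _
      rw [Polynomial.map_C]; exact RatFunc.algebraMap_C _
    rw [e1, e2] at h1
    rwa [RatFunc.smul_eq_C_mul, RatFunc.smul_eq_C_mul]
  refine ⟨fun i => b (L i), fun i => hbmem _, ⟨j, fun h0 => ?_⟩, β P / β Q,
    div_mem (hβmem _) (hβmem _), ?_⟩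
  · have := congrArg b hLM
    rw [map_mul, map_one] at this
    simp only at h0
    rw [h0, zero_mul] at this
    exact zero_ne_one this
  · have := hsum.sub (hrelτ.sub hrelg)
    rw [h, sub_self] at this
    exact sub_eq_zero.1 (this.zero hα)
end
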